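/- arXiv:1801.10485 — 2 statements merged into one kernel-verified Lean document; each statement's English description precedes it below -/
import Mathlib

section
/- Let X be a smooth projective variety of dimension 2d over ℂ and let ℰ ∈ D^b(X) be a ℙ^d-object with associated ℙ^d-twist P_ℰ. Then for every t ≤ 0, h_t(P_ℰ) ≥ -2dt. More precisely, for any split generator G of D^b(X), lim_{n→∞} (1/n) log δ_t(G, P_ℰ^n(ℰ)) = lim_{n→∞} (1/n) log (δ_t(G, ℰ) e^{-2ndt}) = -2dt. -/
open CategoryTheory CategoryTheory.Limits CategoryTheory.Pretriangulated Filter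

universe v u

variable (C : Type u) [Category.{v} C] [Preadditive C] [HasZeroObject C]
  [HasShift C ℤ] [∀ n : ℤ, (shiftFunctor C n).Additive] [Pretriangulated C]
  [HasFiniteBiproducts C] [CategoryTheory.Linear ℂ C]
  [∀ X Y : C, Module.Finite ℂ (X ⟶ Y)]

/-- `BuildVal E t B r` : the object `B` can be built from the zero object by a tower of
`k` distinguished triangles whose successive cones are shifts `E⟦nᵢ⟧` of `E`,
with total weight `r = ∑ᵢ exp(nᵢ t)`. -/
inductive BuildVal (E : C) (t : ℝ) : C → ℝ → Prop
  | zero (Z : C) (hZ : IsZero Z) : BuildVal E t Z 0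
  | step (A B : C) (n : ℤ) (r : ℝ)
      (f : A ⟶ B) (g : B ⟶ (shiftFunctor C n).obj E)
      (h : (shiftFunctor C n).obj E ⟶ (shiftFunctor C (1 : ℤ)).obj A)
      (hT : Triangle.mk f g h ∈ distTriang C)
      (hA : BuildVal E t A r) :
      BuildVal E t B (r + Real.exp ((n : ℝ) * t))

/-- The set of weights `∑ᵢ exp(nᵢ t)` of towers of distinguished triangles with cones
shifts of `E`, ending at an object isomorphic to `F ⊕ F'` for some `F'`. -/
def complexitySet (E F : C) (t : ℝ) : Set ℝ :=
  {r | ∃ B F' : C, BuildVal C E t B r ∧ Nonempty (B ≅ F ⊞ F')}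

/-- The complexity `δ_t(E, F)` of `F` relative to `E` (Dimitrov–Haiden–Katzarkov–Kontsevich). -/
noncomputable def complexity (E F : C) (t : ℝ) : ℝ :=
  sInf (complexitySet C E F t)

/-- `F` lies in the split closure `⟨E⟩` of `E` (expressed via towers). -/
def InSplitClosure (E F : C) : Prop :=
  (complexitySet C E F 0).Nonempty

/-- `G` is a split generator of the triangulated category. -/
def IsSplitGenerator (G : C) : Prop :=
  ∀ F : C, InSplitClosure C G F

/-- The right orthogonal `E^⊥ = {F : Hom^*(E,F) = 0}`. -/
def rightOrthogonal (E : C) : Set C :=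
  {F | ∀ (n : ℤ) (f : E ⟶ (shiftFunctor C n).obj F), f = 0}

/-- A `ℙ^d`-object in a ℂ-linear triangulated category (an abstract model of a `ℙ^d`-object
in `D^b(X)` for `X` smooth projective of dimension `2d` over `ℂ`, in the sense of
Huybrechts–Thomas): `E` is a `2d`-Calabi–Yau object (the Serre-duality reformulation of
`E ⊗ ω_X ≅ E`) and the graded ring `Hom^*(E,E)` is isomorphic to
`H^*(ℙ^d; ℂ) = ℂ[h]/(h^{d+1})`, `deg h = 2`: the graded pieces `Hom^{2k}(E,E)`, `0 ≤ k ≤ d`,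
are one-dimensional, spanned by the powers `h^k`, and all other graded pieces vanish. -/
structure PdObject (d : ℕ) where
  E : C
  nonzero : ¬ IsZero E
  /-- Serre-duality form of `E ⊗ ω_X ≅ E` on a `2d`-dimensional variety:
  `Hom(E, F) ≅ Hom(F, E[2d])^∨` for every `F`. -/
  CY : ∀ F : C, (E ⟶ F) ≃ₗ[ℂ] Module.Dual ℂ (F ⟶ (shiftFunctor C (2 * (d : ℤ))).obj E)
  /-- a generator `h ∈ Hom²(E, E)`. -/
  h : E ⟶ (shiftFunctor C (2 : ℤ)).obj E
  /-- the powers `h^k ∈ Hom^{2k}(E, E)` of `h`. -/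
  hpow : ∀ k : ℕ, (E ⟶ (shiftFunctor C (2 * (k : ℤ))).obj E)
  hpow_zero : hpow 0 = (shiftFunctorZero' C (2 * ((0 : ℕ) : ℤ)) (by simp)).inv.app E
  hpow_succ : ∀ k : ℕ,
    hpow (k + 1) = h ≫ (shiftFunctor C (2 : ℤ)).map (hpow k) ≫
      (shiftFunctorAdd' C (2 * (k : ℤ)) (2 : ℤ) (2 * ((k + 1 : ℕ) : ℤ))
        (by push_cast; ring)).inv.app E
  /-- `Hom^{2k}(E,E)` is one-dimensional for `0 ≤ k ≤ d`. -/
  hom_rank_one : ∀ k : ℕ, k ≤ d →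
    Module.finrank ℂ (E ⟶ (shiftFunctor C (2 * (k : ℤ))).obj E) = 1
  /-- all other graded pieces of `Hom^*(E,E)` vanish. -/
  hom_rank_zero : ∀ n : ℤ, (¬ ∃ k : ℕ, k ≤ d ∧ n = 2 * (k : ℤ)) →
    ∀ f : E ⟶ (shiftFunctor C n).obj E, f = 0
  /-- the powers `h^k`, `k ≤ d`, are nonzero (so they span the graded pieces). -/
  hpow_ne_zero : ∀ k : ℕ, k ≤ d → hpow k ≠ 0

/-- The `ℙ^d`-twist `P_E` associated to a `ℙ^d`-object `E` (Huybrechts–Thomas):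
an autoequivalence `P` such that each `P(F)` is obtained by the double cone construction
`P(F) = Cone(Cone(Hom^{*-2}(E,F) ⊗ E → Hom^*(E,F) ⊗ E) → F)`.
Here `H F` models the object `Hom^*(E,F) ⊗ E`, i.e. the finite direct sum of shifts
`E[-n]` with multiplicity `dim Hom^n(E,F)`, so that `Hom^{*-2}(E,F) ⊗ E = (H F)[-2]`;
`θ F` models the map `h^∨·id − id·h`; `T F` models its cone; and `P F` is the cone of
the induced evaluation map `T F → F`. -/
structure PdTwist (d : ℕ) extends PdObject C d where
  /-- the twist autoequivalence. -/
  P : C ≌ C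
  /-- the twist commutes with the shift functors. -/
  commShift : P.functor.CommShift ℤ
  /-- `H F` models `Hom^*(E,F) ⊗ E`. -/
  H : C → C
  /-- `H F` is a finite direct sum of shifts `E[-n]`, with multiplicity
  `dim_ℂ Hom^n(E,F)` for each `n`. -/
  H_iso : ∀ F : C, ∃ (k : ℕ) (ns : Fin k → ℤ),
    Nonempty (H F ≅ biproduct (fun i => (shiftFunctor C (ns i)).obj E)) ∧
    ∀ n : ℤ, (Finset.univ.filter fun i => ns i = -n).card
        = Module.finrank ℂ (E ⟶ (shiftFunctor C n).obj F)
  /-- the map `h^∨·id − id·h : Hom^{*-2}(E,F) ⊗ E → Hom^*(E,F) ⊗ E`. -/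
  θ : ∀ F : C, (shiftFunctor C (-2 : ℤ)).obj (H F) ⟶ H F
  /-- the inner cone `T F = Cone(θ F)`. -/
  T : C → C
  ι : ∀ F : C, H F ⟶ T F
  π : ∀ F : C, T F ⟶ (shiftFunctor C (1 : ℤ)).obj ((shiftFunctor C (-2 : ℤ)).obj (H F))
  innerTri : ∀ F : C, Triangle.mk (θ F) (ι F) (π F) ∈ distTriang C
  /-- the map `T F → F` induced by the evaluation `Hom^*(E,F) ⊗ E → F`. -/
  ev : ∀ F : C, T F ⟶ F
  η : ∀ F : C, F ⟶ P.functor.obj F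
  dl : ∀ F : C, P.functor.obj F ⟶ (shiftFunctor C (1 : ℤ)).obj (T F)
  /-- `P F = Cone(T F → F)`. -/
  outerTri : ∀ F : C, Triangle.mk (ev F) (η F) (dl F) ∈ distTriang C

/-!
Write `S(X, Y)` for the set of degrees in which `Hom^*(X, Y)` is nonzero.

Along a tower built from shifts of `G`, a degree `m ∈ S(E, F)` must come from a step `G[n]` with
`n + m ∈ S(E, G)`. Since `S(E, G)` is finite, `δ_t(G, F) ≥ c e^{-mt}` with `c > 0` independent of
`F` and `m`. If `Φ E ≅ E[m]`, then `δ_t(G, Φⁿ E) = e^{mnt} δ_t(G, E)` exactly, while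
`j ∈ S(E, G) = S(Φⁿ E, Φⁿ G)` gives `j - mn ∈ S(E, Φⁿ G)`, hence the lower bound on the entropy.

That `W = P_ℰ(ℰ)` is `ℰ[-2d]` follows from the double cone alone: it yields a nonzero
`u : W[2d] ⟶ ℰ`, and shows that `W[2d]` is built from nonnegative shifts of `ℰ`. Let `s : ℰ ⟶ W[p]`
be nonzero with `p` minimal. The fibre of `s` has no maps from `ℰ` in degrees `≤ 0`, so `u` does not
factor through it and `u ≫ s ≠ 0`. This forces `p = 2d`, and as the nonzero endomorphisms of `ℰ`
and `W[2d]` are invertible, `s` is an isomorphism.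
-/

section HomSupport

variable {D : Type u} [Category.{v} D] [HasShift D ℤ] {X X' Y Y' : D} {m n : ℤ}

/-- The set of degrees `n` in which the graded space `Hom^*(X, Y) = ⨁ₙ Hom(X, Y[n])` is nonzero.
The bounds on complexities depend only on these degrees, not on the dimensions. -/
def homSupport (X Y : D) : Set ℤ := {n | Nontrivial (X ⟶ Y⟦n⟧)}

lemma mem_homSupport : n ∈ homSupport X Y ↔ Nontrivial (X ⟶ Y⟦n⟧) := Iff.rfl

lemma homSupport_congr (e : X ≅ X') (e' : Y ≅ Y') : homSupport X Y = homSupport X' Y' :=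
  Set.ext fun n => (e.homCongr ((shiftFunctor D n).mapIso e')).nontrivial_congr

lemma zero_mem_homSupport : 0 ∈ homSupport X Y ↔ Nontrivial (X ⟶ Y) :=
  ((Iso.refl X).homCongr ((shiftFunctorZero D ℤ).app Y)).nontrivial_congr

lemma mem_homSupport_shift_right : n ∈ homSupport X (Y⟦m⟧) ↔ m + n ∈ homSupport X Y :=
  ((Iso.refl X).homCongr ((shiftFunctorAdd D m n).symm.app Y)).nontrivial_congr

lemma mem_homSupport_shift_left : n ∈ homSupport (X⟦m⟧) Y ↔ n - m ∈ homSupport X Y :=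
  (((Functor.FullyFaithful.ofFullyFaithful (shiftFunctor D m)).homEquiv.trans
    ((Iso.refl _).homCongr
      ((shiftFunctorAdd' D (n - m) m n (by lia)).symm.app Y))).nontrivial_congr).symm

lemma homSupport_map (Φ : D ⥤ D) [Φ.Full] [Φ.Faithful] [Φ.CommShift ℤ] :
    homSupport (Φ.obj X) (Φ.obj Y) = homSupport X Y :=
  Set.ext fun n => (((Functor.FullyFaithful.ofFullyFaithful Φ).homEquiv.trans
    ((Iso.refl _).homCongr ((Φ.commShiftIso n).app Y))).nontrivial_congr).symm

lemma homSupport_iterate_obj (Φ : D ⥤ D) [Φ.Full] [Φ.Faithful] [Φ.CommShift ℤ] (k : ℕ) :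
    homSupport (Φ.obj^[k] X) (Φ.obj^[k] Y) = homSupport X Y := by
  induction k with
  | zero => rfl
  | succ k ih => rw [Function.iterate_succ_apply', Function.iterate_succ_apply', homSupport_map, ih]

lemma nonempty_iterate_obj_iso_shift {Φ : D ⥤ D} [Φ.CommShift ℤ] (e : Φ.obj X ≅ X⟦m⟧) (k : ℕ) :
    Nonempty (Φ.obj^[k] X ≅ X⟦m * k⟧) := by
  induction k with
  | zero => exact ⟨(shiftFunctorZero' D (m * (0 : ℕ)) (by simp)).symm.app X⟩
  | succ k ih =>
    obtain ⟨ek⟩ := ih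
    rw [Function.iterate_succ_apply']
    exact ⟨Φ.mapIso ek ≪≫ (Φ.commShiftIso (m * k)).app X ≪≫
      (shiftFunctor D (m * k)).mapIso e ≪≫
      (shiftFunctorAdd' D m (m * k) (m * (k + 1 : ℕ)) (by push_cast; ring)).symm.app X⟩

lemma sub_mem_homSupport_iterate_obj {Φ : D ⥤ D} [Φ.Full] [Φ.Faithful] [Φ.CommShift ℤ]
    (e : Φ.obj X ≅ X⟦m⟧) (hn : n ∈ homSupport X Y) (k : ℕ) :
    n - m * k ∈ homSupport X (Φ.obj^[k] Y) := by
  obtain ⟨ek⟩ := nonempty_iterate_obj_iso_shift e k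
  rwa [← mem_homSupport_shift_left, ← homSupport_congr ek (Iso.refl _), homSupport_iterate_obj]

end HomSupport

section HomSupportPreadditive

variable {D : Type u} [Category.{v} D] [Preadditive D] [HasShift D ℤ] {X X' Y Y' : D} {n : ℤ}

lemma homSupport_subset_of_retract_left (r : Retract X X') : homSupport X Y ⊆ homSupport X' Y := by
  intro n hn
  obtain ⟨f, hf⟩ := @exists_ne _ hn 0
  refine nontrivial_of_ne (r.r ≫ f) 0 fun h => hf ?_
  rw [← Category.id_comp f, ← r.retract, Category.assoc, h, comp_zero]

lemma homSupport_subset_of_retract_right (r : Retract Y Y') :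
    homSupport X Y ⊆ homSupport X Y' := by
  intro n hn
  have r' := r.map (shiftFunctor D n)
  obtain ⟨f, hf⟩ := @exists_ne _ hn 0
  refine nontrivial_of_ne (f ≫ r'.i) 0 fun h => hf ?_
  rw [← Category.comp_id f, ← r'.retract, ← Category.assoc, h, zero_comp]

lemma mem_homSupport_biproduct_left {J : Type*} {f : J → D} [HasBiproduct f] :
    n ∈ homSupport (⨁ f) Y ↔ ∃ j, n ∈ homSupport (f j) Y := by
  refine ⟨fun hn => ?_,
    fun ⟨j, hj⟩ => homSupport_subset_of_retract_left ((biproduct.bicone f).retract j) hj⟩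
  obtain ⟨g, hg⟩ := @exists_ne _ hn 0
  by_contra! hf
  refine hg (biproduct.hom_ext' _ _ fun j => ?_)
  have := not_nontrivial_iff_subsingleton.1 (hf j)
  exact Subsingleton.elim _ _

lemma zero_mem_homSupport_self (hX : ¬ IsZero X) : 0 ∈ homSupport X X :=
  zero_mem_homSupport.2 (nontrivial_of_ne (𝟙 X) 0 (mt (IsZero.iff_id_eq_zero X).2 hX))

lemma notMem_homSupport_of_isZero_right [∀ n : ℤ, (shiftFunctor D n).Additive] (hY : IsZero Y) :
    n ∉ homSupport X Y := by
  intro hn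
  obtain ⟨f, hf⟩ := @exists_ne _ hn 0
  exact hf (((shiftFunctor D n).map_isZero hY).eq_of_tgt f 0)

end HomSupportPreadditive

section Schur

variable {D : Type u} [Category.{v} D] [Preadditive D]

lemma isIso_of_ne_zero_of_finrank_end_eq_one {k : Type*} [Field k] [CategoryTheory.Linear k D]
    {X : D} (hX : Module.finrank k (X ⟶ X) = 1) {f : X ⟶ X} (hf : f ≠ 0) : IsIso f := by
  have hid : 𝟙 X ≠ 0 := fun h => hf (by rw [← Category.comp_id f, h, comp_zero])
  obtain ⟨c, rfl⟩ := exists_smul_eq_of_finrank_eq_one hX hid f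
  have hc : c ≠ 0 := by
    rintro rfl
    exact hf (zero_smul k _)
  exact ⟨c⁻¹ • 𝟙 X, by simp [smul_smul, hc], by simp [smul_smul, hc]⟩

lemma isIso_of_map_ne_zero {D' : Type*} [Category* D'] [Preadditive D'] (Φ : D ⥤ D') [Φ.Full]
    [Φ.PreservesZeroMorphisms] {X : D} (hX : ∀ f : X ⟶ X, f ≠ 0 → IsIso f)
    {g : Φ.obj X ⟶ Φ.obj X} (hg : g ≠ 0) : IsIso g := by
  obtain ⟨f, rfl⟩ := Φ.map_surjective g
  have : IsIso f := hX f fun hf => hg (by rw [hf, Φ.map_zero])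
  infer_instance

lemma isIso_of_comp_ne_zero {X Y : D} (hX : ∀ f : X ⟶ X, f ≠ 0 → IsIso f)
    (hY : ∀ f : Y ⟶ Y, f ≠ 0 → IsIso f) {u : Y ⟶ X} {s : X ⟶ Y} (hus : u ≫ s ≠ 0) :
    IsIso s := by
  have hus' : IsIso (u ≫ s) := hY _ hus
  have hsu : IsIso (s ≫ u) := hX _ fun h => by
    have hsq : (u ≫ s) ≫ u ≫ s = (u ≫ s) ≫ 0 := by
      rw [Category.assoc, ← Category.assoc s u s, h, zero_comp, comp_zero, comp_zero]
    exact hus ((cancel_epi (u ≫ s)).1 hsq)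
  have : IsSplitMono s :=
    ⟨⟨⟨u ≫ inv (s ≫ u), by rw [← Category.assoc, IsIso.hom_inv_id]⟩⟩⟩
  have : IsSplitEpi s :=
    ⟨⟨⟨inv (u ≫ s) ≫ u, by rw [Category.assoc, IsIso.inv_hom_id]⟩⟩⟩
  exact isIso_of_mono_of_isSplitEpi s

end Schur

section Triangles

variable {D : Type u} [Category.{v} D] [Preadditive D] [HasZeroObject D] [HasShift D ℤ]
  [∀ n : ℤ, (shiftFunctor D n).Additive] [Pretriangulated D]
  {T : Triangle D} {X Y : D} {n : ℤ}

lemma mem_homSupport_obj₂_left (hT : T ∈ distTriang D) (hn : n ∈ homSupport T.obj₂ Y) :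
    n ∈ homSupport T.obj₁ Y ∨ n ∈ homSupport T.obj₃ Y := by
  obtain ⟨f, hf⟩ := @exists_ne _ hn 0
  by_cases h : T.mor₁ ≫ f = 0
  · obtain ⟨g, rfl⟩ := T.yoneda_exact₂ hT f h
    exact Or.inr (nontrivial_of_ne g 0 fun hg => hf (by rw [hg, comp_zero]))
  · exact Or.inl (nontrivial_of_ne _ 0 h)

lemma mem_homSupport_obj₁_left (hT : T ∈ distTriang D) (hn : n ∈ homSupport T.obj₁ Y) :
    n ∈ homSupport T.obj₂ Y ∨ n + 1 ∈ homSupport T.obj₃ Y := by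
  rw [← sub_neg_eq_add, ← mem_homSupport_shift_left]
  exact (mem_homSupport_obj₂_left (inv_rot_of_distTriang T hT) hn).symm

lemma mem_homSupport_obj₃_left (hT : T ∈ distTriang D) (hn : n ∈ homSupport T.obj₃ Y) :
    n ∈ homSupport T.obj₂ Y ∨ n - 1 ∈ homSupport T.obj₁ Y := by
  rw [← mem_homSupport_shift_left]
  exact mem_homSupport_obj₂_left (rot_of_distTriang T hT) hn

lemma mem_homSupport_obj₂_right (hT : T ∈ distTriang D) (hn : n ∈ homSupport X T.obj₂) :
    n ∈ homSupport X T.obj₁ ∨ n ∈ homSupport X T.obj₃ := by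
  have hTn := T.shift_distinguished hT n
  obtain ⟨f, hf⟩ := @exists_ne _ hn 0
  by_cases h : f ≫ ((shiftFunctor (Triangle D) n).obj T).mor₂ = 0
  · obtain ⟨g, rfl⟩ := Triangle.coyoneda_exact₂ _ hTn f h
    exact Or.inl (nontrivial_of_ne g 0 fun hg => hf (by rw [hg]; exact zero_comp))
  · exact Or.inr (nontrivial_of_ne _ 0 h)

lemma mem_homSupport_obj₁_right (hT : T ∈ distTriang D) (hn : n ∈ homSupport X T.obj₁) :
    n ∈ homSupport X T.obj₂ ∨ n - 1 ∈ homSupport X T.obj₃ := by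
  rw [sub_eq_neg_add, ← mem_homSupport_shift_right]
  exact (mem_homSupport_obj₂_right (inv_rot_of_distTriang T hT) hn).symm

lemma pos_of_mem_homSupport_obj₁ (hT : T ∈ distTriang D) (h₂ : ∀ j ∈ homSupport X T.obj₂, 0 ≤ j)
    (h₃ : ∀ j ∈ homSupport X T.obj₃, 0 ≤ j) (hinj : ∀ f : X ⟶ T.obj₂, f ≫ T.mor₂ = 0 → f = 0)
    (hn : n ∈ homSupport X T.obj₁) : 0 < n := by
  have hn_nonneg : 0 ≤ n := by
    rcases mem_homSupport_obj₁_right hT hn with hn₂ | hn₃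
    · exact h₂ n hn₂
    · linarith [h₃ _ hn₃]
  refine hn_nonneg.lt_of_ne ?_
  rintro rfl
  obtain ⟨f, hf⟩ := @exists_ne _ (zero_mem_homSupport.1 hn) 0
  have hf₁ : f ≫ T.mor₁ = 0 :=
    hinj _ (by rw [Category.assoc, comp_distTriang_mor_zero₁₂ T hT, comp_zero])
  obtain ⟨g, rfl⟩ := Triangle.coyoneda_exact₂ _ (inv_rot_of_distTriang T hT) f hf₁
  have hg : g ≠ 0 := fun hg => hf (by rw [hg]; exact zero_comp)
  have := h₃ _ (mem_homSupport_shift_right.1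
    (zero_mem_homSupport.2 (nontrivial_of_ne g 0 hg)))
  lia

/-- If `s` kills no endomorphism of `X`, its fibre receives no maps from `X` in degrees `≤ 0`, so
no nonzero `u` can factor through it. -/
lemma comp_ne_zero_of_homSupport_nonneg {U V : D}
    (hU : ∀ Z : D, 0 ∈ homSupport U Z → ∃ j ≤ 0, j ∈ homSupport X Z)
    (hX : ∀ j ∈ homSupport X X, 0 ≤ j) (hV : ∀ j ∈ homSupport X V, 0 ≤ j)
    {s : X ⟶ V} (hs : ∀ f : X ⟶ X, f ≫ s = 0 → f = 0) {u : U ⟶ X} (hu : u ≠ 0) :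
    u ≫ s ≠ 0 := by
  intro hus
  obtain ⟨K, i, δ, hT⟩ := distinguished_cocone_triangle₁ s
  obtain ⟨w, rfl⟩ := Triangle.coyoneda_exact₂ _ hT u hus
  have hw : w ≠ 0 := fun hw => hu (by rw [hw]; exact zero_comp)
  obtain ⟨j, hj, hjK⟩ := hU K (zero_mem_homSupport.2 (nontrivial_of_ne w 0 hw))
  exact hj.not_gt (pos_of_mem_homSupport_obj₁ hT hX hV hs hjK)

end Triangles

section Complexity

variable {D : Type u} [Category.{v} D] [Preadditive D] [HasZeroObject D] [HasShift D ℤ]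
  [∀ n : ℤ, (shiftFunctor D n).Additive] [Pretriangulated D] {E F F' G B : D} {t r : ℝ} {m : ℤ}

namespace BuildVal

lemma nonneg (h : BuildVal D G t B r) : 0 ≤ r := by
  induction h with
  | zero => exact le_rfl
  | step _ _ n r _ _ _ _ _ ih => exact add_nonneg ih (Real.exp_pos _).le

lemma exists_weight (h : BuildVal D G t B r) (t' : ℝ) : ∃ r', BuildVal D G t' B r' := by
  induction h with
  | zero Z hZ => exact ⟨0, zero Z hZ⟩
  | step A B n _ f g h hT _ ih =>
    obtain ⟨r', hr'⟩ := ih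
    exact ⟨_, step A B n r' f g h hT hr'⟩

lemma step_of_iso {T : Triangle D} (hT : T ∈ distTriang D) {n : ℤ} (e : T.obj₃ ≅ G⟦n⟧)
    (h : BuildVal D G t T.obj₁ r) : BuildVal D G t T.obj₂ (r + Real.exp (n * t)) := by
  obtain ⟨X, Y, Z, f, g, δ⟩ := T
  dsimp only at e h ⊢
  have comm₁ : f ≫ 𝟙 Y = 𝟙 X ≫ f := by simp
  have comm₂ : (g ≫ e.hom) ≫ e.inv = 𝟙 Y ≫ g := by simp
  have comm₃ : (e.inv ≫ δ) ≫ (𝟙 X)⟦1⟧' = e.inv ≫ δ := by simp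
  exact step X Y n r f (g ≫ e.hom) (e.inv ≫ δ) (isomorphic_distinguished _ hT _
    (Triangle.isoMk _ _ (Iso.refl X) (Iso.refl Y) e.symm comm₁ comm₂ comm₃)) h

lemma shift (h : BuildVal D G t B r) (m : ℤ) :
    BuildVal D G t (B⟦m⟧) (Real.exp (m * t) * r) := by
  induction h with
  | zero Z hZ => simpa only [mul_zero] using zero _ ((shiftFunctor D m).map_isZero hZ)
  | step A B n r f g h hT _ ih =>
    have hstep := step_of_iso (Triangle.shift_distinguished _ hT m)
      ((shiftFunctorAdd D n m).symm.app G) ih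
    have hweight : Real.exp (m * t) * (r + Real.exp (n * t)) =
        Real.exp (m * t) * r + Real.exp ((n + m : ℤ) * t) := by
      rw [mul_add, ← Real.exp_add, Int.cast_add]
      ring_nf
    rwa [hweight]

lemma exists_exp_le (h : BuildVal D G t B r) (hm : m ∈ homSupport E B) :
    ∃ n ∈ homSupport E G, Real.exp ((n - m) * t) ≤ r := by
  induction h with
  | zero Z hZ => exact (notMem_homSupport_of_isZero_right hZ hm).elim
  | step A B k r f g h hT hA ih =>
    rcases mem_homSupport_obj₂_right hT hm with hmA | hmG
    · obtain ⟨n, hn, hle⟩ := ih hmA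
      exact ⟨n, hn, hle.trans (le_add_of_nonneg_right (Real.exp_pos _).le)⟩
    · refine ⟨k + m, mem_homSupport_shift_right.1 hmG, ?_⟩
      rw [Int.cast_add, add_sub_cancel_right]
      exact le_add_of_nonneg_left hA.nonneg

end BuildVal

lemma exists_exp_le_of_mem_complexitySet (hr : r ∈ complexitySet D G F t)
    (hm : m ∈ homSupport E F) : ∃ n ∈ homSupport E G, Real.exp ((n - m) * t) ≤ r := by
  obtain ⟨B, F', hB, ⟨e⟩⟩ := hr
  have hFB : Retract F B := (BinaryBiproduct.bicone F F').retract_left.trans (Retract.ofIso e.symm)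
  exact hB.exists_exp_le (homSupport_subset_of_retract_right hFB hm)

lemma exp_mul_mem_complexitySet_shift (m : ℤ) (hr : r ∈ complexitySet D G F t) :
    Real.exp (m * t) * r ∈ complexitySet D G (F⟦m⟧) t := by
  obtain ⟨B, F', hB, ⟨e⟩⟩ := hr
  have := preservesBinaryBiproducts_of_preservesBiproducts (shiftFunctor D m)
  exact ⟨B⟦m⟧, F'⟦m⟧, hB.shift m,
    ⟨(shiftFunctor D m).mapIso e ≪≫ (shiftFunctor D m).mapBiprod F F'⟩⟩

lemma complexitySet_congr (e : F ≅ F') : complexitySet D G F t = complexitySet D G F' t := by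
  have hsub {F F' : D} (e : F ≅ F') : complexitySet D G F t ⊆ complexitySet D G F' t :=
    fun _ ⟨B, F₁, hB, ⟨i⟩⟩ => ⟨B, F₁, hB, ⟨i ≪≫ biprod.mapIso e (Iso.refl F₁)⟩⟩
  exact (hsub e).antisymm (hsub e.symm)

open Pointwise in
lemma complexitySet_shift (m : ℤ) :
    complexitySet D G (F⟦m⟧) t = Real.exp (m * t) • complexitySet D G F t := by
  refine Set.Subset.antisymm ?_ (Set.smul_set_subset_iff.2 fun r hr =>
    exp_mul_mem_complexitySet_shift m hr)
  rw [Set.subset_smul_set_iff₀ (Real.exp_pos _).ne', Set.smul_set_subset_iff]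
  intro r hr
  have hr' := exp_mul_mem_complexitySet_shift (-m) hr
  rw [complexitySet_congr (shiftShiftNeg F m)] at hr'
  simpa only [Int.cast_neg, neg_mul, Real.exp_neg, smul_eq_mul] using hr'

lemma complexity_congr (e : F ≅ F') : complexity D G F t = complexity D G F' t := by
  rw [complexity, complexity, complexitySet_congr e]

lemma complexity_shift (m : ℤ) :
    complexity D G (F⟦m⟧) t = Real.exp (m * t) * complexity D G F t := by
  rw [complexity, complexitySet_shift, Real.sInf_smul_of_nonneg (Real.exp_pos _).le, complexity,
    smul_eq_mul]

namespace IsSplitGenerator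

lemma complexitySet_nonempty (hG : IsSplitGenerator D G) (F : D) (t : ℝ) :
    (complexitySet D G F t).Nonempty := by
  obtain ⟨_, B, F', hB, e⟩ := hG F
  obtain ⟨r, hr⟩ := hB.exists_weight t
  exact ⟨r, B, F', hr, e⟩

lemma homSupport_nonempty (hG : IsSplitGenerator D G) (hEF : (homSupport E F).Nonempty) :
    (homSupport E G).Nonempty := by
  obtain ⟨m, hm⟩ := hEF
  obtain ⟨r, hr⟩ := hG F
  obtain ⟨n, hn, -⟩ := exists_exp_le_of_mem_complexitySet hr hm
  exact ⟨n, hn⟩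

lemma exists_pos_mul_exp_le_complexity (hG : IsSplitGenerator D G) (hfin : (homSupport E G).Finite)
    (t : ℝ) : ∃ c > 0, ∀ (F : D), ∀ m ∈ homSupport E F,
      c * Real.exp (-m * t) ≤ complexity D G F t := by
  obtain ⟨b, hb⟩ := (hfin.image fun n : ℤ => (n : ℝ) * t).bddBelow
  refine ⟨Real.exp b, Real.exp_pos b, fun F m hm => ?_⟩
  refine le_csInf (hG.complexitySet_nonempty F t) fun r hr => ?_
  obtain ⟨n, hn, hle⟩ := exists_exp_le_of_mem_complexitySet hr hm
  refine le_trans ?_ hle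
  rw [← Real.exp_add, Real.exp_le_exp]
  linarith [hb (Set.mem_image_of_mem _ hn)]

lemma complexity_pos (hG : IsSplitGenerator D G) (hfin : (homSupport E G).Finite)
    (hEF : (homSupport E F).Nonempty) (t : ℝ) : 0 < complexity D G F t := by
  obtain ⟨c, hc, hle⟩ := hG.exists_pos_mul_exp_le_complexity hfin t
  obtain ⟨m, hm⟩ := hEF
  exact (mul_pos hc (Real.exp_pos _)).trans_le (hle F m hm)

end IsSplitGenerator

end Complexity

section ExponentialGrowth

lemma tendsto_log_mul_exp_div {a : ℝ} (ha : a ≠ 0) (b : ℝ) :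
    Tendsto (fun n : ℕ => Real.log (a * Real.exp (b * n)) / n) atTop (nhds b) := by
  have hlim : Tendsto (fun n : ℕ => Real.log a / n + b) atTop (nhds b) := by
    simpa only [zero_add] using
      (tendsto_const_div_atTop_nhds_zero_nat (Real.log a)).add_const b
  refine hlim.congr' ?_
  filter_upwards [eventually_ne_atTop 0] with n hn
  rw [Real.log_mul ha (Real.exp_ne_zero _), Real.log_exp, add_div,
    mul_div_cancel_right₀ b (Nat.cast_ne_zero.2 hn)]

lemma le_liminf_log_div {x : ℕ → ℝ} {b c : ℝ} (hc : 0 < c)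
    (hx : ∀ n : ℕ, c * Real.exp (b * n) ≤ x n) :
    (b : EReal) ≤ atTop.liminf fun n : ℕ => ((Real.log (x n) / n : ℝ) : EReal) := by
  have hlim : Tendsto (fun n : ℕ => ((Real.log (c * Real.exp (b * n)) / n : ℝ) : EReal)) atTop
      (nhds (b : EReal)) :=
    EReal.tendsto_coe.2 (tendsto_log_mul_exp_div hc.ne' b)
  rw [← hlim.liminf_eq]
  refine liminf_le_liminf (Eventually.of_forall fun n => EReal.coe_le_coe_iff.2 ?_)
  gcongr
  exact hx n

end ExponentialGrowth

section Entropy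

variable {D : Type u} [Category.{v} D] [Preadditive D] [HasZeroObject D] [HasShift D ℤ]
  [∀ n : ℤ, (shiftFunctor D n).Additive] [Pretriangulated D]
  {Φ : D ⥤ D} [Φ.CommShift ℤ] {E F G : D} {m : ℤ}

lemma complexity_iterate_obj (e : Φ.obj E ≅ E⟦m⟧) (t : ℝ) (n : ℕ) :
    complexity D G (Φ.obj^[n] E) t = complexity D G E t * Real.exp (m * t * n) := by
  obtain ⟨en⟩ := nonempty_iterate_obj_iso_shift e n
  rw [complexity_congr en, complexity_shift, mul_comm]
  push_cast
  ring_nf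

namespace IsSplitGenerator

lemma tendsto_log_complexity_iterate_obj_div (hG : IsSplitGenerator D G)
    (hfin : (homSupport E G).Finite) (hE : ¬ IsZero E) (e : Φ.obj E ≅ E⟦m⟧) (t : ℝ) :
    Tendsto (fun n : ℕ => Real.log (complexity D G (Φ.obj^[n] E) t) / n) atTop
      (nhds (m * t)) := by
  simp only [complexity_iterate_obj e]
  exact tendsto_log_mul_exp_div
    (hG.complexity_pos hfin ⟨0, zero_mem_homSupport_self hE⟩ t).ne' _

lemma le_liminf_log_complexity_iterate_obj_div [Φ.Full] [Φ.Faithful] (hG : IsSplitGenerator D G)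
    (hfin : (homSupport E G).Finite) (hEF : (homSupport E F).Nonempty) (e : Φ.obj E ≅ E⟦m⟧)
    (t : ℝ) :
    ((m * t : ℝ) : EReal) ≤
      atTop.liminf fun n : ℕ => ((Real.log (complexity D G (Φ.obj^[n] F) t) / n : ℝ) : EReal) := by
  obtain ⟨c, hc, hle⟩ := hG.exists_pos_mul_exp_le_complexity hfin t
  obtain ⟨j, hj⟩ := hEF
  refine le_liminf_log_div (mul_pos hc (Real.exp_pos (-j * t))) fun n => ?_
  have hn := hle _ _ (sub_mem_homSupport_iterate_obj e hj n)
  rw [mul_assoc, ← Real.exp_add]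
  convert hn using 3
  push_cast
  ring

end IsSplitGenerator

end Entropy

section PdObject

variable {D : Type u} [Category.{v} D] [Preadditive D] [HasShift D ℤ] [CategoryTheory.Linear ℂ D]
  {d : ℕ} {n : ℤ}

namespace PdObject

lemma mem_homSupport_self (P : PdObject D d) :
    n ∈ homSupport P.E P.E ↔ ∃ k : ℕ, k ≤ d ∧ n = 2 * (k : ℤ) := by
  constructor
  · contrapose!
    intro hn
    have hzero := P.hom_rank_zero n (by push Not; exact hn)
    rw [mem_homSupport, not_nontrivial_iff_subsingleton]
    exact subsingleton_of_forall_eq 0 hzero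
  · rintro ⟨k, hk, rfl⟩
    exact Module.nontrivial_of_finrank_pos (R := ℂ) (by rw [P.hom_rank_one k hk]; exact one_pos)

lemma nonneg_of_mem_homSupport_self (P : PdObject D d) (hn : n ∈ homSupport P.E P.E) : 0 ≤ n := by
  obtain ⟨k, -, rfl⟩ := P.mem_homSupport_self.1 hn
  positivity

lemma le_of_mem_homSupport_self (P : PdObject D d) (hn : n ∈ homSupport P.E P.E) : n ≤ 2 * d := by
  obtain ⟨k, hk, rfl⟩ := P.mem_homSupport_self.1 hn
  gcongr

lemma finrank_end (P : PdObject D d) : Module.finrank ℂ (P.E ⟶ P.E) = 1 := by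
  have e : P.E⟦2 * ((0 : ℕ) : ℤ)⟧ ≅ P.E := (shiftFunctorZero' D _ (by simp)).app P.E
  rw [← P.hom_rank_one 0 (Nat.zero_le d)]
  exact (Linear.homCongr ℂ (Iso.refl P.E) e).finrank_eq.symm

lemma isIso_of_ne_zero (P : PdObject D d) (f : P.E ⟶ P.E) (hf : f ≠ 0) : IsIso f :=
  isIso_of_ne_zero_of_finrank_end_eq_one P.finrank_end hf

end PdObject

end PdObject

namespace PdTwist

variable {D : Type u} [Category.{v} D] [Preadditive D] [HasZeroObject D] [HasShift D ℤ]
  [∀ n : ℤ, (shiftFunctor D n).Additive] [Pretriangulated D] [HasFiniteBiproducts D]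
  [CategoryTheory.Linear ℂ D] {d : ℕ} {n : ℤ} {Y : D}

attribute [local instance] PdTwist.commShift

lemma mem_homSupport_T (tw : PdTwist D d) {F : D} (hn : n ∈ homSupport (tw.T F) Y) :
    n ∈ homSupport (tw.H F) Y ∨ n + 1 ∈ homSupport (tw.H F) Y := by
  refine (mem_homSupport_obj₃_left (tw.innerTri F) hn).imp_right fun h => ?_
  have h' := mem_homSupport_shift_left.1 h
  rwa [show n - 1 - -2 = n + 1 by ring] at h'

section FiniteHoms

variable [∀ X Y : D, Module.Finite ℂ (X ⟶ Y)]

lemma exists_H_iso_biproduct (tw : PdTwist D d) (F : D) :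
    ∃ (k : ℕ) (ns : Fin k → ℤ), Nonempty (tw.H F ≅ ⨁ fun i => tw.E⟦ns i⟧) ∧
      ∀ n : ℤ, n ∈ homSupport tw.E F ↔ ∃ i, ns i = -n := by
  obtain ⟨k, ns, e, hcard⟩ := tw.H_iso F
  refine ⟨k, ns, e, fun n => ?_⟩
  rw [mem_homSupport, ← Module.finrank_pos_iff (R := ℂ), ← hcard n, Finset.card_pos]
  simp only [Finset.Nonempty, Finset.mem_filter, Finset.mem_univ, true_and]

lemma homSupport_finite (tw : PdTwist D d) (F : D) : (homSupport tw.E F).Finite := by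
  obtain ⟨k, ns, -, hns⟩ := tw.exists_H_iso_biproduct F
  refine (Set.finite_range fun i => -ns i).subset fun n hn => ?_
  obtain ⟨i, hi⟩ := (hns n).1 hn
  exact ⟨i, neg_eq_iff_eq_neg.2 hi⟩

lemma mem_homSupport_H (tw : PdTwist D d) {F : D} :
    n ∈ homSupport (tw.H F) Y ↔ ∃ j ∈ homSupport tw.E F, n + j ∈ homSupport tw.E Y := by
  obtain ⟨k, ns, ⟨e⟩, hns⟩ := tw.exists_H_iso_biproduct F
  rw [homSupport_congr e (Iso.refl Y), mem_homSupport_biproduct_left]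
  simp only [mem_homSupport_shift_left]
  constructor
  · rintro ⟨i, hi⟩
    exact ⟨-ns i, (hns _).2 ⟨i, (neg_neg _).symm⟩, hi⟩
  · rintro ⟨j, hj, hjY⟩
    obtain ⟨i, hi⟩ := (hns j).1 hj
    exact ⟨i, by rwa [hi, sub_neg_eq_add]⟩

lemma exists_le_add_mem_homSupport (tw : PdTwist D d)
    (hn : n ∈ homSupport (tw.P.functor.obj tw.E) Y) :
    ∃ j ≤ 2 * (d : ℤ), n + j ∈ homSupport tw.E Y := by
  have hH {k : ℤ} (hk : k ∈ homSupport (tw.H tw.E) Y) :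
      ∃ j ≤ 2 * (d : ℤ), k + j ∈ homSupport tw.E Y := by
    obtain ⟨j, hj, hjY⟩ := tw.mem_homSupport_H.1 hk
    exact ⟨j, tw.le_of_mem_homSupport_self hj, hjY⟩
  rcases mem_homSupport_obj₃_left (tw.outerTri tw.E) hn with hE | hT
  · exact ⟨0, by positivity, by rwa [add_zero]⟩
  rcases tw.mem_homSupport_T hT with hpred | hself
  · obtain ⟨j, hj, hjY⟩ := hH hpred
    exact ⟨j - 1, by lia, by rwa [show n + (j - 1) = n - 1 + j by ring]⟩
  · rw [sub_add_cancel] at hself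
    exact hH hself

lemma neg_le_of_mem_homSupport_H_self (tw : PdTwist D d)
    (hn : n ∈ homSupport (tw.H tw.E) tw.E) : -2 * (d : ℤ) ≤ n := by
  obtain ⟨j, hj, hnj⟩ := tw.mem_homSupport_H.1 hn
  linarith [tw.le_of_mem_homSupport_self hj, tw.nonneg_of_mem_homSupport_self hnj]

lemma neg_mem_homSupport_H_self (tw : PdTwist D d) :
    -2 * (d : ℤ) ∈ homSupport (tw.H tw.E) tw.E :=
  tw.mem_homSupport_H.2 ⟨2 * d, tw.mem_homSupport_self.2 ⟨d, le_rfl, rfl⟩, by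
    rw [show -2 * (d : ℤ) + 2 * d = 0 by ring]
    exact zero_mem_homSupport_self tw.nonzero⟩

lemma neg_mem_homSupport_functor_obj (tw : PdTwist D d) :
    -2 * (d : ℤ) ∈ homSupport (tw.P.functor.obj tw.E) tw.E := by
  have hH : -2 * (d : ℤ) - 2 ∈ homSupport ((tw.H tw.E)⟦(-2 : ℤ)⟧) tw.E :=
    mem_homSupport_shift_left.2 (by simpa using tw.neg_mem_homSupport_H_self)
  have hT : -2 * (d : ℤ) - 1 ∈ homSupport (tw.T tw.E) tw.E := by
    rcases mem_homSupport_obj₁_left (tw.innerTri tw.E) hH with hlow | hT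
    · have := tw.neg_le_of_mem_homSupport_H_self hlow
      lia
    · rwa [show -2 * (d : ℤ) - 2 + 1 = -2 * (d : ℤ) - 1 by ring] at hT
  rcases mem_homSupport_obj₁_left (tw.outerTri tw.E) hT with hneg | hP
  · have := tw.nonneg_of_mem_homSupport_self hneg
    lia
  · rwa [sub_add_cancel] at hP

lemma comp_ne_zero_of_mem_lowerBounds (tw : PdTwist D d) {p : ℤ}
    (hp : p ∈ lowerBounds (homSupport tw.E (tw.P.functor.obj tw.E)))
    {u : (tw.P.functor.obj tw.E)⟦2 * (d : ℤ)⟧ ⟶ tw.E} (hu : u ≠ 0)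
    {s : tw.E ⟶ (tw.P.functor.obj tw.E)⟦p⟧} (hs : s ≠ 0) : u ≫ s ≠ 0 := by
  refine comp_ne_zero_of_homSupport_nonneg (fun Z hZ => ?_)
    (fun j => tw.nonneg_of_mem_homSupport_self) (fun j hj => ?_) (fun f hf => ?_) hu
  · obtain ⟨j, hj, hjZ⟩ := tw.exists_le_add_mem_homSupport (mem_homSupport_shift_left.1 hZ)
    exact ⟨_, by lia, hjZ⟩
  · linarith [hp (mem_homSupport_shift_right.1 hj)]
  · by_contra hf₀
    have := tw.isIso_of_ne_zero f hf₀
    exact hs ((cancel_epi f).1 (hf.trans comp_zero.symm))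

lemma exists_functor_obj_shift_hom_ne_zero (tw : PdTwist D d) :
    ∃ u : (tw.P.functor.obj tw.E)⟦2 * (d : ℤ)⟧ ⟶ tw.E, u ≠ 0 := by
  refine @exists_ne _ (zero_mem_homSupport.1 (mem_homSupport_shift_left.2 ?_)) 0
  simpa using tw.neg_mem_homSupport_functor_obj

lemma isLeast_homSupport_functor_obj (tw : PdTwist D d) :
    IsLeast (homSupport tw.E (tw.P.functor.obj tw.E)) (2 * (d : ℤ)) := by
  have hself : homSupport (tw.P.functor.obj tw.E) (tw.P.functor.obj tw.E) =
    homSupport tw.E tw.E := homSupport_map tw.P.functor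
  obtain ⟨j, hj, hjmem⟩ := tw.exists_le_add_mem_homSupport
    (hself ▸ zero_mem_homSupport_self tw.nonzero)
  obtain ⟨p, hp⟩ := (tw.homSupport_finite _).bddBelow.exists_isLeast_of_nonempty ⟨_, hjmem⟩
  obtain ⟨s, hs⟩ := @exists_ne _ hp.1 0
  obtain ⟨u, hu⟩ := tw.exists_functor_obj_shift_hom_ne_zero
  have hus : p - 2 * d ∈ homSupport tw.E tw.E := by
    rw [← hself, ← mem_homSupport_shift_left]
    exact nontrivial_of_ne _ 0 (tw.comp_ne_zero_of_mem_lowerBounds hp.2 hu hs)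
  have hle : p ≤ 2 * d := by linarith [hp.2 hjmem]
  have hge : 2 * d ≤ p := by linarith [tw.nonneg_of_mem_homSupport_self hus]
  rwa [← hle.antisymm hge]

theorem nonempty_functor_obj_iso_shift (tw : PdTwist D d) :
    Nonempty (tw.P.functor.obj tw.E ≅ tw.E⟦-2 * (d : ℤ)⟧) := by
  have hleast := tw.isLeast_homSupport_functor_obj
  obtain ⟨s, hs⟩ := @exists_ne _ hleast.1 0
  obtain ⟨u, hu⟩ := tw.exists_functor_obj_shift_hom_ne_zero
  have hendo : ∀ f : (tw.P.functor.obj tw.E)⟦2 * (d : ℤ)⟧ ⟶ (tw.P.functor.obj tw.E)⟦2 * (d : ℤ)⟧,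
      f ≠ 0 → IsIso f := fun f =>
    isIso_of_map_ne_zero (tw.P.functor ⋙ shiftFunctor D (2 * (d : ℤ))) tw.isIso_of_ne_zero
  have : IsIso s := isIso_of_comp_ne_zero tw.isIso_of_ne_zero hendo
    (tw.comp_ne_zero_of_mem_lowerBounds hleast.2 hu hs)
  exact ⟨(shiftShiftNeg (tw.P.functor.obj tw.E) (2 * (d : ℤ))).symm ≪≫
    (shiftFunctor D (-(2 * (d : ℤ)))).mapIso (asIso s).symm ≪≫
    eqToIso (by rw [neg_mul])⟩

end FiniteHoms

end PdTwist

theorem entropy_PdTwist_ge_general (d : ℕ) (tw : PdTwist C d) (t : ℝ) :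
    ∀ G : C, IsSplitGenerator C G →
      (((-2 * (d : ℝ) * t : ℝ) : EReal) ≤
        atTop.liminf (fun n : ℕ =>
          ((Real.log (complexity C G ((fun X => tw.P.functor.obj X)^[n] G) t) / n : ℝ) : EReal))) ∧
      Tendsto (fun n : ℕ =>
          Real.log (complexity C G ((fun X => tw.P.functor.obj X)^[n] tw.E) t) / n)
        atTop (nhds (-2 * (d : ℝ) * t)) ∧
      Tendsto (fun n : ℕ =>
          Real.log (complexity C G tw.E t * Real.exp (-2 * (n : ℝ) * (d : ℝ) * t)) / n)
        atTop (nhds (-2 * (d : ℝ) * t)) := by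
  intro G hG
  have := tw.commShift
  obtain ⟨e⟩ := tw.nonempty_functor_obj_iso_shift
  have hEE : (homSupport tw.E tw.E).Nonempty := ⟨0, zero_mem_homSupport_self tw.nonzero⟩
  have hfin := tw.homSupport_finite G
  have hrate : ((-2 * (d : ℤ) : ℤ) : ℝ) * t = -2 * (d : ℝ) * t := by push_cast; rfl
  refine ⟨?_, ?_, ?_⟩
  · rw [← hrate]
    exact hG.le_liminf_log_complexity_iterate_obj_div hfin (hG.homSupport_nonempty hEE) e t
  · rw [← hrate]
    exact hG.tendsto_log_complexity_iterate_obj_div hfin tw.nonzero e t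
  · refine (tendsto_log_mul_exp_div (hG.complexity_pos hfin hEE t).ne' (-2 * d * t)).congr
      fun n => ?_
    ring_nf

/-- For every `t ≤ 0`, `h_t(P_ℰ) ≥ -2dt` (stated as a `liminf` bound);
more precisely, for any split generator `G`,
`lim (1/n) log δ_t(G, P_ℰ^n(ℰ)) = lim (1/n) log (δ_t(G, ℰ) e^{-2ndt}) = -2dt`. -/
theorem entropy_PdTwist_ge (d : ℕ) (tw : PdTwist C d) (t : ℝ) (ht : t ≤ 0) :
    ∀ G : C, IsSplitGenerator C G →
      (((-2 * (d : ℝ) * t : ℝ) : EReal) ≤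
        atTop.liminf (fun n : ℕ =>
          ((Real.log (complexity C G ((fun X => tw.P.functor.obj X)^[n] G) t) / n : ℝ) : EReal))) ∧
      Tendsto (fun n : ℕ =>
          Real.log (complexity C G ((fun X => tw.P.functor.obj X)^[n] tw.E) t) / n)
        atTop (nhds (-2 * (d : ℝ) * t)) ∧
      Tendsto (fun n : ℕ =>
          Real.log (complexity C G tw.E t * Real.exp (-2 * (n : ℝ) * (d : ℝ) * t)) / n)
        atTop (nhds (-2 * (d : ℝ) * t)) :=
  entropy_PdTwist_ge_general C d tw t
end

section
/- Let X be a smooth projective variety of dimension 2d over ℂ and let ℰ ∈ D^b(X) be a ℙ^d-object with associated ℙ^d-twist P_ℰ. Then for every t > 0, h_t(P_ℰ) ≤ 0. -/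
open CategoryTheory CategoryTheory.Limits CategoryTheory.Pretriangulated Filter

universe v u

variable (C : Type u) [Category.{v} C] [Preadditive C] [HasZeroObject C]
  [HasShift C ℤ] [∀ n : ℤ, (shiftFunctor C n).Additive] [Pretriangulated C]
  [HasFiniteBiproducts C] [CategoryTheory.Linear ℂ C]
  [∀ X Y : C, Module.Finite ℂ (X ⟶ Y)]

/-!
The twist carries `E` to a shift `E⟦m⟧`. Indeed `P E` is built from shifts of `E`, so it has a
top-degree map `E⟦a⟧ ⟶ P E` and a bottom-degree map `P E ⟶ E⟦b⟧` (`b ≤ a`); if `b < a`, they would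
produce a self-extension of `P E` of negative degree, hence `a = b`, and an object with scalar
endomorphisms that is a summand of copies of `E⟦a⟧` is `E⟦a⟧`. The defining triangles bound the
shift by `m ≤ 1`. If `m = 1`, then `E ⟶ P E` lies in `Ext¹(E, E) = 0`, so `T E ⟶ E` splits, while
`Hom(E, T E)` is too small to hold both this splitting and the map `P E ⟶ (T E)⟦1⟧`.

Since `m ≤ 0`, the weight `∑ₙ dim Extⁿ(E, Pʲ G) exp(-nt)` of the cells of `Hom^*(E, Pʲ G) ⊗ E` does
not increase with `j` when `0 ≤ t`. Each application of `P` attaches two shifted copies of that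
object, so the complexity of `Pʲ G` grows at most linearly in `j`.

Complexity would be additive along triangles by (TR4), which a pretriangulated
category may lack. Instead of composing towers, we kill the cells of the cone one at a time and
factor through an object that merely dominates the kernel of the quotient map.
-/

section WeakKernels

variable {𝒟 : Type u} [Category.{v} 𝒟] [Preadditive 𝒟]

/-- Every morphism killed by `u` factors through `k`; unlike for a weak kernel, `k ≫ u` need not
vanish. In the absence of octahedra this replaces "`k` is the fibre of `u`". -/
def DominatesKernel {K F W : 𝒟} (k : K ⟶ F) (u : F ⟶ W) : Prop :=
  ∀ ⦃X : 𝒟⦄ (φ : X ⟶ F), φ ≫ u = 0 → ∃ ψ : X ⟶ K, φ = ψ ≫ k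

theorem DominatesKernel.nonempty_retract {K F W : 𝒟} {k : K ⟶ F}
    (hk : DominatesKernel k (0 : F ⟶ W)) : Nonempty (Retract F K) := by
  obtain ⟨ψ, hψ⟩ := hk (𝟙 F) comp_zero
  exact ⟨⟨ψ, k, hψ.symm⟩⟩

variable [HasZeroObject 𝒟] [HasShift 𝒟 ℤ] [∀ n : ℤ, (shiftFunctor 𝒟 n).Additive]
  [Pretriangulated 𝒟]

theorem dominatesKernel_of_distTriang {A B X : 𝒟} {f : A ⟶ B} {g : B ⟶ X} {h : X ⟶ A⟦(1 : ℤ)⟧}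
    (hT : Triangle.mk f g h ∈ distTriang 𝒟) : DominatesKernel f g :=
  fun _ φ hφ => Triangle.coyoneda_exact₂ _ hT φ hφ

-- The class of the extension `K'` is `P ⟶ F' ⟶ cone k ⟶ K⟦1⟧`: the fibre of `u` dies in
-- `cone k`, so `F ⟶ cone k` descends along `u`.
theorem DominatesKernel.exists_extension {K F F' F'' P : 𝒟} {k : K ⟶ F} {u : F ⟶ F'}
    (hk : DominatesKernel k u) {p : P ⟶ F'} {v : F' ⟶ F''} {y : F'' ⟶ P⟦(1 : ℤ)⟧}
    (hv : Triangle.mk p v y ∈ distTriang 𝒟) :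
    ∃ (K' : 𝒟) (i : K ⟶ K') (π : K' ⟶ P) (δ : P ⟶ K⟦(1 : ℤ)⟧) (k' : K' ⟶ F),
      Triangle.mk i π δ ∈ distTriang 𝒟 ∧ DominatesKernel k' (u ≫ v) := by
  obtain ⟨X, g, h, hX⟩ := distinguished_cocone_triangle k
  obtain ⟨N, ν, w, hN⟩ := distinguished_cocone_triangle₁ u
  have hkg : k ≫ g = 0 := comp_distTriang_mor_zero₁₂ _ hX
  have hgh : g ≫ h = 0 := comp_distTriang_mor_zero₂₃ _ hX
  have hνg : ν ≫ g = 0 := by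
    obtain ⟨ψ, rfl⟩ := hk ν (comp_distTriang_mor_zero₁₂ _ hN)
    rw [Category.assoc, hkg, comp_zero]
  obtain ⟨κ, hκ⟩ : ∃ κ : F' ⟶ X, g = u ≫ κ := Triangle.yoneda_exact₂ _ hN g hνg
  obtain ⟨K', i, π, hK'⟩ := distinguished_cocone_triangle₂ (p ≫ κ ≫ h)
  obtain ⟨k', hik, hkπ⟩ : ∃ k' : K' ⟶ F, i ≫ k' = 𝟙 K ≫ k ∧ π ≫ p ≫ κ = k' ≫ g :=
    complete_distinguished_triangle_morphism₂ _ _ hK' hX (𝟙 K) (p ≫ κ)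
      (show (p ≫ κ ≫ h) ≫ (𝟙 K)⟦(1 : ℤ)⟧' = (p ≫ κ) ≫ h by simp)
  refine ⟨K', i, π, _, k', hK', fun Z φ hφ => ?_⟩
  obtain ⟨ψ, hψ⟩ : ∃ ψ : Z ⟶ P, φ ≫ u = ψ ≫ p :=
    Triangle.coyoneda_exact₂ _ hv (φ ≫ u) ((Category.assoc _ _ _).trans hφ)
  have hφg : φ ≫ g = ψ ≫ p ≫ κ := by rw [hκ, reassoc_of% hψ]
  obtain ⟨ψ', rfl⟩ : ∃ ψ' : Z ⟶ K', ψ = ψ' ≫ π :=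
    Triangle.coyoneda_exact₃ _ hK' ψ (show ψ ≫ p ≫ κ ≫ h = 0 by
      rw [← Category.assoc p, ← Category.assoc ψ, ← hφg, Category.assoc, hgh, comp_zero])
  obtain ⟨χ, hχ⟩ : ∃ χ : Z ⟶ K, φ - ψ' ≫ k' = χ ≫ k :=
    Triangle.coyoneda_exact₂ _ hX (φ - ψ' ≫ k') (show (φ - ψ' ≫ k') ≫ g = 0 by
      rw [Preadditive.sub_comp, hφg, Category.assoc, Category.assoc, hkπ, sub_self])
  exact ⟨χ ≫ i + ψ', by
    rw [Preadditive.add_comp, Category.assoc, hik, Category.id_comp, ← hχ, sub_add_cancel]⟩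

end WeakKernels

section Cells

variable {𝒟 : Type u} [Category.{v} 𝒟] [Preadditive 𝒟] [HasZeroObject 𝒟] [HasShift 𝒟 ℤ]
  [∀ n : ℤ, (shiftFunctor 𝒟 n).Additive] [Pretriangulated 𝒟]

/-- `u` is a composite of maps whose fibres are shifts `G⟦nᵢ⟧`, with total weight
`c = ∑ᵢ exp(nᵢ t)`: the analogue of `BuildVal` for killing cells instead of adding them. -/
inductive CellQuotient (G : 𝒟) (t : ℝ) {W : 𝒟} : ∀ {W' : 𝒟}, (W ⟶ W') → ℝ → Prop
  | id : CellQuotient G t (𝟙 W) 0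
  | step {W' W'' : 𝒟} {u : W ⟶ W'} {c : ℝ} (n : ℤ) {p : G⟦n⟧ ⟶ W'} {v : W' ⟶ W''}
      {y : W'' ⟶ G⟦n⟧⟦(1 : ℤ)⟧} (hT : Triangle.mk p v y ∈ distTriang 𝒟)
      (hu : CellQuotient G t u c) : CellQuotient G t (u ≫ v) (c + Real.exp (n * t))

namespace CellQuotient

variable {G : 𝒟} {t : ℝ}

theorem comp {W W' W'' : 𝒟} {u : W ⟶ W'} {v : W' ⟶ W''} {c c' : ℝ} (hu : CellQuotient G t u c)
    (hv : CellQuotient G t v c') : CellQuotient G t (u ≫ v) (c + c') := by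
  induction hv with
  | id => simpa using hu
  | step n hT _ ih => simpa [add_assoc] using ih.step n hT

theorem exists_dominatesKernel {W W' : 𝒟} {v : W ⟶ W'} {c : ℝ} (hv : CellQuotient G t v c)
    {K F : 𝒟} {k : K ⟶ F} {u : F ⟶ W} {r : ℝ} (hK : BuildVal 𝒟 G t K r)
    (hk : DominatesKernel k u) :
    ∃ (K' : 𝒟) (k' : K' ⟶ F), BuildVal 𝒟 G t K' (r + c) ∧ DominatesKernel k' (u ≫ v) := by
  induction hv with
  | id => exact ⟨K, k, by simpa using hK, by simpa using hk⟩
  | step n hT _ ih =>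
    obtain ⟨K', k', hK', hk'⟩ := ih
    obtain ⟨K'', i, π, δ, k'', hT', hk''⟩ := hk'.exists_extension hT
    exact ⟨K'', k'', by simpa only [add_assoc] using hK'.step _ _ n _ i π δ hT',
      by simpa only [Category.assoc] using hk''⟩

end CellQuotient

/-- Every map out of `S` dies after killing cells `G⟦nᵢ⟧` of total weight `c`. This plays the role
of the complexity `δ_t(G, S)`, but is additive along extensions without using octahedra. -/
def Annihilable (G : 𝒟) (t : ℝ) (S : 𝒟) (c : ℝ) : Prop :=
  ∀ ⦃W : 𝒟⦄ (a : S ⟶ W), ∃ (W' : 𝒟) (u : W ⟶ W'), a ≫ u = 0 ∧ CellQuotient G t u c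

namespace Annihilable

variable {G : 𝒟} {t : ℝ}

theorem shift_self (G : 𝒟) (t : ℝ) (n : ℤ) : Annihilable G t (G⟦n⟧) (Real.exp (n * t)) := by
  intro W a
  obtain ⟨W', v, y, hT⟩ := distinguished_cocone_triangle a
  exact ⟨W', v, comp_distTriang_mor_zero₁₂ _ hT, by
    simpa using (CellQuotient.id (G := G) (t := t)).step n hT⟩

theorem of_isZero {S : 𝒟} (hS : IsZero S) : Annihilable G t S 0 :=
  fun _ _ => ⟨_, 𝟙 _, hS.eq_of_src _ _, .id⟩

theorem retract {S S' : 𝒟} {c : ℝ} (h : Annihilable G t S' c) (ρ : Retract S S') :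
    Annihilable G t S c := by
  intro W a
  obtain ⟨W', u, hu, hc⟩ := h (ρ.r ≫ a)
  exact ⟨W', u, by rw [← Category.id_comp a, ← ρ.retract, Category.assoc, Category.assoc,
    ← Category.assoc ρ.r, hu, comp_zero], hc⟩

theorem extension {A B X : 𝒟} {f : A ⟶ B} {g : B ⟶ X} {h : X ⟶ A⟦(1 : ℤ)⟧} {c c' : ℝ}
    (hT : Triangle.mk f g h ∈ distTriang 𝒟) (hA : Annihilable G t A c)
    (hX : Annihilable G t X c') : Annihilable G t B (c + c') := by
  intro W a
  obtain ⟨W', u, hu, hc⟩ := hA (f ≫ a)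
  obtain ⟨b, hb⟩ : ∃ b : X ⟶ W', a ≫ u = g ≫ b :=
    Triangle.yoneda_exact₂ _ hT (a ≫ u) ((Category.assoc _ _ _).symm.trans hu)
  obtain ⟨W'', v, hv, hc'⟩ := hX b
  exact ⟨W'', u ≫ v, by rw [← Category.assoc, hb, Category.assoc, hv, comp_zero], hc.comp hc'⟩

theorem biproduct {ι : Type*} [Fintype ι] {S : ι → 𝒟} [HasBiproduct S] {c : ι → ℝ}
    (h : ∀ i, Annihilable G t (S i) (c i)) : Annihilable G t (⨁ S) (∑ i, c i) := by
  classical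
  intro W a
  suffices ∀ s : Finset ι, ∃ (W' : 𝒟) (u : W ⟶ W'),
      (∀ i ∈ s, biproduct.ι S i ≫ a ≫ u = 0) ∧ CellQuotient G t u (∑ i ∈ s, c i) by
    obtain ⟨W', u, hu, hc⟩ := this Finset.univ
    exact ⟨W', u, biproduct.hom_ext' _ _ fun i => by
      rw [hu i (Finset.mem_univ i), comp_zero], hc⟩
  intro s
  induction s using Finset.induction_on with
  | empty => exact ⟨W, 𝟙 W, by simp, by simpa using CellQuotient.id⟩
  | insert j s hj ih =>
    obtain ⟨W', u, hu, hc⟩ := ih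
    obtain ⟨W'', v, hv, hc'⟩ := h j (biproduct.ι S j ≫ a ≫ u)
    simp only [Category.assoc] at hv
    refine ⟨W'', u ≫ v, fun i hi => ?_, ?_⟩
    · obtain rfl | hi := Finset.mem_insert.mp hi
      · exact hv
      · rw [← Category.assoc a, ← Category.assoc, hu i hi, zero_comp]
    · rw [Finset.sum_insert hj, add_comm]
      exact hc.comp hc'

theorem shift_of_buildVal {Y : 𝒟} {r : ℝ} (h : BuildVal 𝒟 G t Y r) (n : ℤ) :
    Annihilable G t (Y⟦n⟧) (Real.exp (n * t) * r) := by
  induction h with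
  | zero Z hZ => simpa using of_isZero ((shiftFunctor 𝒟 n).map_isZero hZ)
  | step A B m r f g h hT _ ih =>
    have hG : Annihilable G t (G⟦m⟧⟦n⟧) (Real.exp (n * t) * Real.exp (m * t)) := by
      rw [← Real.exp_add, ← add_mul, add_comm (n : ℝ)]
      exact_mod_cast (shift_self G t (m + n)).retract
        (Retract.ofIso ((shiftFunctorAdd 𝒟 m n).app G).symm)
    rw [mul_add]
    exact extension (Triangle.shift_distinguished _ hT n) ih hG

end Annihilable

theorem BuildVal.nonneg_s12 {G : 𝒟} {t : ℝ} {B : 𝒟} {r : ℝ} (h : BuildVal 𝒟 G t B r) : 0 ≤ r := by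
  induction h with
  | zero => exact le_rfl
  | step => positivity

theorem exists_iso_biprod_of_retract {F B : 𝒟} (ρ : Retract F B) :
    ∃ F' : 𝒟, Nonempty (B ≅ F ⊞ F') := by
  obtain ⟨F', g, h, hT⟩ := distinguished_cocone_triangle ρ.i
  have hi : h ≫ ρ.i⟦(1 : ℤ)⟧' = 0 := comp_distTriang_mor_zero₃₁ _ hT
  have hh : h = 0 :=
    (cancel_mono (ρ.map (shiftFunctor 𝒟 (1 : ℤ))).i).mp (hi.trans zero_comp.symm)
  obtain ⟨e, -⟩ := exists_iso_binaryBiproduct_of_distTriang _ hT hh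
  exact ⟨F', ⟨e⟩⟩

theorem mem_complexitySet_iff {G F : 𝒟} {t r : ℝ} :
    r ∈ complexitySet 𝒟 G F t ↔ ∃ B : 𝒟, BuildVal 𝒟 G t B r ∧ Nonempty (Retract F B) := by
  constructor
  · rintro ⟨B, F', hB, ⟨e⟩⟩
    exact ⟨B, hB, ⟨⟨biprod.inl ≫ e.inv, e.hom ≫ biprod.fst, by simp⟩⟩⟩
  · rintro ⟨B, hB, ⟨ρ⟩⟩
    obtain ⟨F', e⟩ := exists_iso_biprod_of_retract ρ
    exact ⟨B, F', hB, e⟩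

theorem one_mem_complexitySet_self (G : 𝒟) (t : ℝ) : (1 : ℝ) ∈ complexitySet 𝒟 G G t := by
  obtain ⟨Z, f, h, hT⟩ := distinguished_cocone_triangle₁ (𝟙 (G⟦(0 : ℤ)⟧))
  have hZ : IsZero Z := Triangle.isZero₁_of_isIso₂ _ hT (IsIso.id _)
  refine mem_complexitySet_iff.mpr ⟨G⟦(0 : ℤ)⟧, ?_, ⟨.ofIso ((shiftFunctorZero 𝒟 ℤ).app G).symm⟩⟩
  simpa using (BuildVal.zero Z hZ).step _ _ 0 0 f _ h hT

theorem complexity_nonneg (G F : 𝒟) (t : ℝ) : 0 ≤ complexity 𝒟 G F t :=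
  Real.sInf_nonneg fun _ ⟨_, _, h, _⟩ => h.nonneg_s12

theorem complexity_le_of_mem {G F : 𝒟} {t r : ℝ} (h : r ∈ complexitySet 𝒟 G F t) :
    complexity 𝒟 G F t ≤ r :=
  csInf_le ⟨0, fun _ ⟨_, _, h, _⟩ => h.nonneg_s12⟩ h

theorem BuildVal.exists_weight_s12 {G : 𝒟} {s : ℝ} {B : 𝒟} {r : ℝ} (h : BuildVal 𝒟 G s B r) (t : ℝ) :
    ∃ r', BuildVal 𝒟 G t B r' := by
  induction h with
  | zero Z hZ => exact ⟨0, .zero Z hZ⟩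
  | step A B n _ f g h hT _ ih =>
    obtain ⟨r', hA⟩ := ih
    exact ⟨_, hA.step A B n r' f g h hT⟩

theorem exists_annihilable_shift {G E : 𝒟} (hE : InSplitClosure 𝒟 G E) (t : ℝ) :
    ∃ c : ℝ, 0 ≤ c ∧ ∀ n : ℤ, Annihilable G t (E⟦n⟧) (Real.exp (n * t) * c) := by
  obtain ⟨_, hr⟩ := hE
  obtain ⟨B, hB₀, ⟨ρ⟩⟩ := mem_complexitySet_iff.mp hr
  obtain ⟨c, hB⟩ := hB₀.exists_weight_s12 t
  exact ⟨c, hB.nonneg_s12, fun n => (Annihilable.shift_of_buildVal hB n).retract (ρ.map _)⟩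

-- Kill the identity of `S`: the tower of `A` then grows into one dominating the kernel of
-- `B ⟶ S ⟶ W` where the composite vanishes, so that `𝟙 B` factors through it.
theorem add_mem_complexitySet_of_distTriang {G A B S : 𝒟} {t r c : ℝ} {f : A ⟶ B} {g : B ⟶ S}
    {h : S ⟶ A⟦(1 : ℤ)⟧} (hT : Triangle.mk f g h ∈ distTriang 𝒟)
    (hA : r ∈ complexitySet 𝒟 G A t) (hS : Annihilable G t S c) :
    r + c ∈ complexitySet 𝒟 G B t := by
  obtain ⟨K, hK, ⟨ρ⟩⟩ := mem_complexitySet_iff.mp hA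
  obtain ⟨W, u, hu, hc⟩ := hS (𝟙 S)
  have hk : DominatesKernel (ρ.r ≫ f) g := fun X φ hφ => by
    obtain ⟨ψ, rfl⟩ := dominatesKernel_of_distTriang hT φ hφ
    exact ⟨ψ ≫ ρ.i, by simp⟩
  obtain ⟨K', k', hK', hk'⟩ := hc.exists_dominatesKernel hK hk
  rw [← Category.id_comp u, hu, comp_zero] at hk'
  exact mem_complexitySet_iff.mpr ⟨K', hK', hk'.nonempty_retract⟩

end Cells

section ScalarEndomorphisms

variable {k : Type*} [Field k] {𝒟 : Type*} [Category 𝒟] [Preadditive 𝒟] [Linear k 𝒟]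

theorem finrank_le_of_surjective_of_exists_map_smul {V V' : Type*} [AddCommGroup V] [Module k V]
    [Module.Finite k V] [AddCommGroup V'] [Module k V'] (φ : V →+ V')
    (hφ : Function.Surjective φ) (hsmul : ∀ (z : k) (f : V), ∃ z' : k, φ (z • f) = z' • φ f) :
    Module.finrank k V' ≤ Module.finrank k V := by
  let b := Module.finBasis k V
  have hspan : Submodule.span k (Set.range (φ ∘ b)) = ⊤ := by
    refine eq_top_iff.mpr fun x _ => ?_
    obtain ⟨f, rfl⟩ := hφ x
    rw [← b.sum_repr f, map_sum]
    refine Submodule.sum_mem _ fun i _ => ?_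
    obtain ⟨z, hz⟩ := hsmul (b.repr f i) (b i)
    rw [hz]
    exact Submodule.smul_mem _ z (Submodule.subset_span ⟨i, rfl⟩)
  simpa using finrank_le_of_span_eq_top hspan

variable (k) in
/-- Every endomorphism of `E` is a scalar. -/
def HasScalarEnd (E : 𝒟) : Prop := ∀ f : E ⟶ E, ∃ z : k, f = z • 𝟙 E

variable {𝒟' : Type*} [Category 𝒟'] [Preadditive 𝒟'] [Linear k 𝒟']

-- `Φ` need not be `k`-linear, but it maps scalars of `E` to scalars of `E'`.
theorem HasScalarEnd.finrank_hom_le_of_functor {E' : 𝒟'} (hE' : HasScalarEnd k E') {E X : 𝒟}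
    {X' : 𝒟'} [Module.Finite k (E ⟶ X)] (Φ : 𝒟 ⥤ 𝒟') [Φ.Additive] [Φ.Full] (α : E' ≅ Φ.obj E)
    (β : Φ.obj X ≅ X') : Module.finrank k (E' ⟶ X') ≤ Module.finrank k (E ⟶ X) := by
  let φ : (E ⟶ X) →+ (E' ⟶ X') :=
    AddMonoidHom.mk' (fun f => α.hom ≫ Φ.map f ≫ β.hom) fun f g => by simp
  refine finrank_le_of_surjective_of_exists_map_smul φ (fun x => ?_) fun z f => ?_
  · obtain ⟨f, hf⟩ := Φ.map_surjective (α.inv ≫ x ≫ β.inv)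
    exact ⟨f, by simp [φ, hf]⟩
  · obtain ⟨z', hz'⟩ := hE' (α.hom ≫ Φ.map (z • 𝟙 E) ≫ α.inv)
    have hα : α.hom ≫ Φ.map (z • 𝟙 E) = z' • α.hom := by
      rw [← cancel_mono α.inv, Category.assoc, hz', Linear.smul_comp, α.hom_inv_id]
    refine ⟨z', ?_⟩
    calc α.hom ≫ Φ.map (z • f) ≫ β.hom
        = (α.hom ≫ Φ.map (z • 𝟙 E)) ≫ Φ.map f ≫ β.hom := by
          rw [Category.assoc, ← Φ.map_comp_assoc, Linear.smul_comp, Category.id_comp]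
      _ = z' • φ f := by rw [hα, Linear.smul_comp]; rfl

theorem HasScalarEnd.finrank_end_le_one {E : 𝒟} (hE : HasScalarEnd k E) :
    Module.finrank k (E ⟶ E) ≤ 1 :=
  finrank_le_one (𝟙 E) fun f => (hE f).imp fun _ hz => hz.symm

theorem HasScalarEnd.isIso_of_ne_zero {E : 𝒟} (hE : HasScalarEnd k E) {f : E ⟶ E} (hf : f ≠ 0) :
    IsIso f := by
  obtain ⟨z, rfl⟩ := hE f
  have hz : z ≠ 0 := fun h => hf (by rw [h, zero_smul])
  exact ⟨z⁻¹ • 𝟙 E, by simp [smul_smul, hz], by simp [smul_smul, hz]⟩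

theorem HasScalarEnd.obj [IsAlgClosed k] {E : 𝒟} (hE : HasScalarEnd k E) (Φ : 𝒟 ⥤ 𝒟')
    [Φ.Additive] [Φ.Full] [Module.Finite k (Φ.obj E ⟶ Φ.obj E)] : HasScalarEnd k (Φ.obj E) := by
  by_cases h₀ : 𝟙 (Φ.obj E) = 0
  · exact fun f => ⟨0, by rw [← Category.id_comp f, h₀, zero_comp, zero_smul]⟩
  have hiso (f : Φ.obj E ⟶ Φ.obj E) : IsIso f ↔ f ≠ 0 := by
    refine ⟨?_, fun hf => ?_⟩
    · rintro hf rfl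
      exact h₀ (by rw [← IsIso.hom_inv_id (0 : Φ.obj E ⟶ Φ.obj E), zero_comp])
    · obtain ⟨g, rfl⟩ := Φ.map_surjective f
      have := hE.isIso_of_ne_zero (f := g) fun hg => hf (by rw [hg, Φ.map_zero])
      infer_instance
  intro f
  obtain ⟨z, hz⟩ :=
    (finrank_eq_one_iff_of_nonzero' _ h₀).mp (finrank_endomorphism_eq_one k hiso) f
  exact ⟨z, hz.symm⟩

variable (k) in
theorem finrank_hom_biproduct_le {ι : Type*} [Fintype ι] (X : 𝒟) (S : ι → 𝒟) [HasBiproduct S]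
    [∀ i, Module.Finite k (X ⟶ S i)] :
    Module.finrank k (X ⟶ ⨁ S) ≤ ∑ i, Module.finrank k (X ⟶ S i) := by
  rw [← Module.finrank_pi_fintype]
  refine LinearMap.finrank_le_finrank_of_injective
    (f := LinearMap.pi fun i => Linear.rightComp k X (biproduct.π S i)) fun f g hfg => ?_
  exact biproduct.hom_ext _ _ fun i => congrFun hfg i

theorem exists_bijective_comp_biproduct_of_hasScalarEnd [HasFiniteBiproducts 𝒟] {X : 𝒟}
    (hX : HasScalarEnd k X) (W : 𝒟) [Module.Finite k (X ⟶ W)] :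
    ∃ (N : ℕ) (κ : (⨁ fun _ : Fin N => X) ⟶ W),
      Function.Bijective fun x : X ⟶ ⨁ fun _ : Fin N => X => x ≫ κ := by
  let b := Module.finBasis k (X ⟶ W)
  have hcomp (z : Fin _ → k) :
      biproduct.lift (fun i => z i • 𝟙 X) ≫ biproduct.desc b = ∑ i, z i • b i := by
    simp only [biproduct.lift_desc, Linear.smul_comp, Category.id_comp]
  have hlift (x : X ⟶ ⨁ fun _ : Fin (Module.finrank k (X ⟶ W)) => X) :
      ∃ z : Fin _ → k, x = biproduct.lift fun i => z i • 𝟙 X := by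
    choose z hz using fun i => hX (x ≫ biproduct.π _ i)
    exact ⟨z, biproduct.hom_ext _ _ fun i => by rw [hz, biproduct.lift_π]⟩
  refine ⟨_, biproduct.desc b, fun x y hxy => ?_,
    fun f => ⟨_, (hcomp (b.repr f)).trans (b.sum_repr f)⟩⟩
  obtain ⟨z, rfl⟩ := hlift x
  obtain ⟨w, rfl⟩ := hlift y
  simp only [hcomp] at hxy
  have hzw : z = w := b.equivFun.symm.injective (by simpa [Module.Basis.equivFun_symm_apply])
  rw [hzw]

theorem exists_iso_of_retract_biproduct {ι : Type} [Finite ι] {Q : 𝒟} {S : ι → 𝒟}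
    [HasBiproduct S] (hQ₀ : ¬ IsZero Q) (hQ : HasScalarEnd k Q) (hS : ∀ i, HasScalarEnd k (S i))
    (ρ : Retract Q (⨁ S)) : ∃ i, Nonempty (Q ≅ S i) := by
  have := Fintype.ofFinite ι
  have hid : 𝟙 Q ≠ 0 := fun h => hQ₀ ((IsZero.iff_id_eq_zero Q).mpr h)
  obtain ⟨i, hi⟩ : ∃ i, (ρ.i ≫ biproduct.π S i) ≫ biproduct.ι S i ≫ ρ.r ≠ 0 := by
    by_contra! h
    refine hid ?_
    calc 𝟙 Q = ρ.i ≫ (∑ i, biproduct.π S i ≫ biproduct.ι S i) ≫ ρ.r := by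
          rw [biproduct.total, Category.id_comp, ρ.retract]
      _ = ∑ i, (ρ.i ≫ biproduct.π S i) ≫ biproduct.ι S i ≫ ρ.r := by
          simp only [Preadditive.sum_comp, Preadditive.comp_sum, Category.assoc]
      _ = 0 := Finset.sum_eq_zero fun i _ => h i
  generalize ρ.i ≫ biproduct.π S i = x at hi
  generalize biproduct.ι S i ≫ ρ.r = y at hi
  have hxy : IsIso (x ≫ y) := hQ.isIso_of_ne_zero hi
  have hyx : IsIso (y ≫ x) := (hS i).isIso_of_ne_zero fun h => hi <| by
    rw [← cancel_mono (x ≫ y), Category.assoc, reassoc_of% h, zero_comp, zero_comp, comp_zero]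
  have : Mono x := mono_of_mono x y
  have : IsSplitEpi x := .mk' ⟨inv (y ≫ x) ≫ y, by rw [Category.assoc, IsIso.inv_hom_id]⟩
  have : IsIso x := isIso_of_mono_of_isSplitEpi x
  exact ⟨i, ⟨asIso x⟩⟩

end ScalarEndomorphisms

section ExtWeight

/-- `∑ₙ dim Extⁿ(E, F) exp(-nt)`, the weight of the shifts of `E` in `Hom^*(E, F) ⊗ E`. It is
meaningful when only finitely many of the spaces are nonzero (the `finsum` is `0` otherwise). -/
noncomputable def extWeight (k : Type*) [Field k] {𝒟 : Type*} [Category 𝒟] [Preadditive 𝒟]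
    [Linear k 𝒟] [HasShift 𝒟 ℤ] (E F : 𝒟) (t : ℝ) : ℝ :=
  ∑ᶠ n : ℤ, Module.finrank k (E ⟶ F⟦n⟧) * Real.exp (-n * t)

variable {k : Type*} [Field k] {𝒟 : Type*} [Category 𝒟] [Preadditive 𝒟]
    [Linear k 𝒟] [HasShift 𝒟 ℤ] {E F F' : 𝒟} {t : ℝ}

variable (k E F t) in
theorem extWeight_nonneg : 0 ≤ extWeight k E F t :=
  finsum_nonneg fun _ => by positivity

theorem finrank_support_subset_range {ι : Type*} [Fintype ι] {ns : ι → ℤ}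
    (hns : ∀ n : ℤ, (Finset.univ.filter fun i => ns i = -n).card = Module.finrank k (E ⟶ F⟦n⟧)) :
    {n : ℤ | Module.finrank k (E ⟶ F⟦n⟧) ≠ 0} ⊆ Set.range fun i => -ns i := by
  intro n hn
  rw [Set.mem_ofPred_eq, ← hns, Finset.card_ne_zero] at hn
  obtain ⟨i, hi⟩ := hn
  exact ⟨i, neg_eq_iff_eq_neg.mpr (Finset.mem_filter.mp hi).2⟩

theorem extWeight_eq_sum {ι : Type*} [Fintype ι] {ns : ι → ℤ}
    (hns : ∀ n : ℤ, (Finset.univ.filter fun i => ns i = -n).card = Module.finrank k (E ⟶ F⟦n⟧)) :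
    extWeight k E F t = ∑ i, Real.exp (ns i * t) := by
  have hsum := Finset.sum_comp (s := Finset.univ) (fun n : ℤ => Real.exp (-n * t)) fun i => -ns i
  simp only [neg_eq_iff_eq_neg, hns, nsmul_eq_mul, Int.cast_neg, neg_neg] at hsum
  rw [hsum]
  refine finsum_eq_sum_of_support_subset _ fun n hn => ?_
  rw [Finset.coe_image, Finset.coe_univ, Set.image_univ]
  exact finrank_support_subset_range hns fun h₀ => hn (by simp [h₀])

theorem extWeight_le_of_finrank_le {m : ℤ} (hm : m ≤ 0) (ht : 0 ≤ t)
    (hF : {n : ℤ | Module.finrank k (E ⟶ F⟦n⟧) ≠ 0}.Finite)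
    (h : ∀ n : ℤ, Module.finrank k (E ⟶ F'⟦n⟧) ≤ Module.finrank k (E ⟶ F⟦n + m⟧)) :
    extWeight k E F' t ≤ extWeight k E F t := by
  have hshift : {n : ℤ | Module.finrank k (E ⟶ F⟦n + m⟧) ≠ 0}.Finite :=
    hF.preimage (add_left_injective m).injOn
  calc extWeight k E F' t
      ≤ ∑ᶠ n : ℤ, Module.finrank k (E ⟶ F⟦n + m⟧) * Real.exp (-(n + m : ℤ) * t) := by
        refine finsum_le_finsum' (hshift.subset fun n hn h₀ => hn ?_)
          (hshift.subset fun n hn h₀ => hn ?_) fun n => ?_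
        · simp [Nat.le_zero.mp ((h n).trans_eq h₀)]
        · simp [h₀]
        · have := h n
          gcongr
          exact add_le_of_nonpos_right hm
    _ = extWeight k E F t := finsum_comp_equiv (Equiv.addRight m)
          (f := fun n : ℤ => (Module.finrank k (E ⟶ F⟦n⟧) : ℝ) * Real.exp (-n * t))

end ExtWeight

section DistinguishedTriangles

variable {𝒟 : Type*} [Category 𝒟] [Preadditive 𝒟] [HasZeroObject 𝒟] [HasShift 𝒟 ℤ]
  [∀ n : ℤ, (shiftFunctor 𝒟 n).Additive] [Pretriangulated 𝒟]

theorem distTriang_of_iso₃ {A B X X' : 𝒟} {f : A ⟶ B} {g : B ⟶ X} {h : X ⟶ A⟦(1 : ℤ)⟧}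
    (hT : Triangle.mk f g h ∈ distTriang 𝒟) (e : X ≅ X') :
    Triangle.mk f (g ≫ e.hom) (e.inv ≫ h) ∈ distTriang 𝒟 :=
  isomorphic_distinguished _ hT _ <| Triangle.isoMk _ _ (Iso.refl A) (Iso.refl B) e.symm
    (show f ≫ 𝟙 B = 𝟙 A ≫ f by simp) (show (g ≫ e.hom) ≫ e.inv = 𝟙 B ≫ g by simp)
    (show (e.inv ≫ h) ≫ (𝟙 A)⟦(1 : ℤ)⟧' = e.inv ≫ h by simp)

end DistinguishedTriangles

section Biproducts

variable {𝒟 : Type*} [Category 𝒟] [Preadditive 𝒟] [HasShift 𝒟 ℤ]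
  [∀ n : ℤ, (shiftFunctor 𝒟 n).Additive] [HasFiniteBiproducts 𝒟]

/-- The shift of a finite direct sum of shifts of `E`. -/
noncomputable def shiftBiproductIso {ι : Type} [Finite ι] (E : 𝒟) (ns : ι → ℤ) (n : ℤ) :
    (⨁ fun i => E⟦ns i⟧)⟦n⟧ ≅ ⨁ fun i => E⟦ns i + n⟧ :=
  (shiftFunctor 𝒟 n).mapBiproduct _ ≪≫
    biproduct.mapIso fun i => ((shiftFunctorAdd 𝒟 (ns i) n).app E).symm

end Biproducts

section OrthogonalBiproducts

variable {𝒟 : Type*} [Category 𝒟] [HasZeroMorphisms 𝒟] {P : ObjectProperty 𝒟}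

theorem rightOrthogonal_biproduct {ι : Type*} {S : ι → 𝒟} [HasBiproduct S]
    (hS : ∀ i, P.rightOrthogonal (S i)) : P.rightOrthogonal (⨁ S) := fun _ f hX =>
  biproduct.hom_ext _ _ fun i => by rw [hS i (f ≫ biproduct.π S i) hX, zero_comp]

theorem leftOrthogonal_biproduct {ι : Type*} {S : ι → 𝒟} [HasBiproduct S]
    (hS : ∀ i, P.leftOrthogonal (S i)) : P.leftOrthogonal (⨁ S) := fun _ f hX =>
  biproduct.hom_ext' _ _ fun i => by rw [hS i (biproduct.ι S i ≫ f) hX, comp_zero]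

theorem singleton_rightOrthogonal_iff {Q X : 𝒟} :
    (ObjectProperty.singleton Q).rightOrthogonal X ↔ ∀ f : Q ⟶ X, f = 0 :=
  ⟨fun h f => h f (.mk ()), by rintro h _ f ⟨⟩; exact h f⟩

theorem eq_zero_of_map_eq_zero_of_iso {𝒟' : Type*} [Category 𝒟'] [HasZeroMorphisms 𝒟'] {X Y : 𝒟}
    (h : ∀ f : X ⟶ Y, f = 0) (Φ : 𝒟 ⥤ 𝒟') [Φ.Full] [Φ.PreservesZeroMorphisms] {X' Y' : 𝒟'}
    (α : Φ.obj X ≅ X') (β : Φ.obj Y ≅ Y') (f : X' ⟶ Y') : f = 0 := by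
  obtain ⟨g, hg⟩ := Φ.map_surjective (α.hom ≫ f ≫ β.inv)
  rw [h g, Φ.map_zero] at hg
  rw [← cancel_mono β.inv, ← cancel_epi α.hom, ← hg, zero_comp, comp_zero]

end OrthogonalBiproducts

section Aisles

variable {𝒟 : Type*} [Category 𝒟] [Preadditive 𝒟] [HasShift 𝒟 ℤ]

/-- The objects receiving no nonzero morphism from the shifts `E⟦y⟧` with `c ≤ y`. -/
abbrev shiftCoaisle (E : 𝒟) (c : ℤ) : ObjectProperty 𝒟 :=
  (ObjectProperty.ofObj fun y : Set.Ici c => E⟦(y : ℤ)⟧).rightOrthogonal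

/-- The objects with no nonzero morphism to an object of `shiftCoaisle E c`; they form the closure
of the shifts `E⟦y⟧` with `c ≤ y` under the operations that Hom-vanishing can detect. -/
abbrev shiftAisle (E : 𝒟) (c : ℤ) : ObjectProperty 𝒟 :=
  (shiftCoaisle E c).leftOrthogonal

variable {E : 𝒟} {c c' : ℤ} {Q W : 𝒟}

theorem shiftCoaisle_iff :
    shiftCoaisle E c W ↔ ∀ y : ℤ, c ≤ y → ∀ f : E⟦y⟧ ⟶ W, f = 0 := by
  refine ⟨fun h y hy f => h f (.mk (⟨y, hy⟩ : Set.Ici c)), ?_⟩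
  rintro h _ f ⟨y⟩
  exact h y y.2 f

theorem shiftCoaisle_mono (hc : c ≤ c') (hW : shiftCoaisle E c W) : shiftCoaisle E c' W :=
  shiftCoaisle_iff.mpr fun y hy => shiftCoaisle_iff.mp hW y (hc.trans hy)

theorem shiftAisle_shift {y : ℤ} (hy : c ≤ y) : shiftAisle E c (E⟦y⟧) :=
  fun _ f hW => shiftCoaisle_iff.mp hW y hy f

theorem isZero_of_shiftAisle_of_shiftCoaisle (hQ : shiftAisle E c Q) (hQ' : shiftCoaisle E c Q) :
    IsZero Q :=
  (IsZero.iff_id_eq_zero Q).mpr (hQ _ hQ')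

theorem shiftCoaisle_shift [∀ n : ℤ, (shiftFunctor 𝒟 n).Additive] (hW : shiftCoaisle E c W)
    (n : ℤ) : shiftCoaisle E (c + n) (W⟦n⟧) :=
  shiftCoaisle_iff.mpr fun y hy => eq_zero_of_map_eq_zero_of_iso
    (shiftCoaisle_iff.mp hW (y - n) (le_sub_iff_add_le.mpr hy)) (shiftFunctor 𝒟 n)
    ((shiftFunctorAdd' 𝒟 (y - n) n y (sub_add_cancel y n)).symm.app E) (Iso.refl _)

theorem exists_shiftCoaisle_hom_ne_zero {M M' : ℤ} (hQ₀ : ¬ IsZero Q)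
    (hQ : shiftAisle E M Q) (hQ' : shiftCoaisle E M' Q) :
    ∃ a < M', shiftCoaisle E (a + 1) Q ∧ ∃ f : E⟦a⟧ ⟶ Q, f ≠ 0 := by
  have hbdd (a : ℤ) (ha : ∃ f : E⟦a⟧ ⟶ Q, f ≠ 0) : a < M' := by
    obtain ⟨f, hf⟩ := ha
    exact lt_of_not_ge fun hle => hf (shiftCoaisle_iff.mp hQ' a hle f)
  obtain ⟨a, ha, hmax⟩ := Int.exists_greatest_of_bdd (P := fun a => ∃ f : E⟦a⟧ ⟶ Q, f ≠ 0)
    ⟨M', fun a ha => (hbdd a ha).le⟩ <| by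
      by_contra! h
      exact hQ₀ (isZero_of_shiftAisle_of_shiftCoaisle hQ (shiftCoaisle_iff.mpr fun y _ => h y))
  refine ⟨a, hbdd a ha, shiftCoaisle_iff.mpr fun y hy f => ?_, ha⟩
  by_contra hf
  exact (Int.add_one_le_iff.mp hy).not_ge (hmax y ⟨f, hf⟩)

end Aisles

section RigidBricks

variable (k : Type*) [Field k] {𝒟 : Type*} [Category 𝒟] [Preadditive 𝒟] [Linear k 𝒟]
  [HasShift 𝒟 ℤ]

/-- An object all of whose endomorphisms are scalars and all of whose self-extensions of negative
degree and of degree one vanish. These are the properties of a `ℙ^d`-object that make its twist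
send it to one of its shifts. -/
structure IsRigidBrick (E : 𝒟) : Prop where
  scalar_end : HasScalarEnd k E
  hom_neg (n : ℤ) (hn : n < 0) (f : E ⟶ E⟦n⟧) : f = 0
  hom_one (f : E ⟶ E⟦(1 : ℤ)⟧) : f = 0

variable {k}

theorem hom_shift_eq_zero [∀ n : ℤ, (shiftFunctor 𝒟 n).Additive] {E : 𝒟} {n : ℤ}
    (h : ∀ f : E ⟶ E⟦n⟧, f = 0) {a b : ℤ} (hab : n + a = b) (f : E⟦a⟧ ⟶ E⟦b⟧) : f = 0 :=
  eq_zero_of_map_eq_zero_of_iso h (shiftFunctor 𝒟 a) (Iso.refl _)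
    ((shiftFunctorAdd' 𝒟 n a b hab).symm.app E) f

variable [∀ n : ℤ, (shiftFunctor 𝒟 n).Additive] [HasFiniteBiproducts 𝒟] {E Q W : 𝒟} {c : ℤ}

namespace IsRigidBrick

theorem eq_zero_of_comp_shift_eq_zero (hE : IsRigidBrick k E) {N : ℕ}
    {κ : (⨁ fun _ : Fin N => E⟦c⟧) ⟶ W}
    (hκ : ∀ x : E⟦c⟧ ⟶ ⨁ fun _ : Fin N => E⟦c⟧, x ≫ κ = 0 → x = 0) {y : ℤ} (hy : c ≤ y)
    {x : E⟦y⟧ ⟶ (⨁ fun _ : Fin N => E⟦c⟧)⟦(1 : ℤ)⟧} (hx : x ≫ κ⟦(1 : ℤ)⟧' = 0) : x = 0 := by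
  by_cases hyc : y = c + 1
  · subst hyc
    let e := (shiftFunctorAdd 𝒟 c 1).app E
    obtain ⟨x₀, hx₀⟩ := (shiftFunctor 𝒟 (1 : ℤ)).map_surjective (e.inv ≫ x)
    have hx₀κ : x₀ ≫ κ = 0 := (shiftFunctor 𝒟 (1 : ℤ)).map_injective <| by
      rw [Functor.map_comp, hx₀, Category.assoc, hx, comp_zero, Functor.map_zero]
    rw [← cancel_epi e.inv, ← hx₀, hκ x₀ hx₀κ, Functor.map_zero, comp_zero]
  · refine singleton_rightOrthogonal_iff.mp (ObjectProperty.prop_of_iso _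
      (shiftBiproductIso E (fun _ => c) 1).symm (rightOrthogonal_biproduct fun _ =>
        singleton_rightOrthogonal_iff.mpr ?_)) x
    rcases hy.eq_or_lt with rfl | hy
    · exact hom_shift_eq_zero hE.hom_one (add_comm 1 c)
    · exact hom_shift_eq_zero (hE.hom_neg (c + 1 - y) (by lia)) (sub_add_cancel _ y)

variable [HasZeroObject 𝒟] [Pretriangulated 𝒟] [IsAlgClosed k]
  [∀ X Y : 𝒟, Module.Finite k (X ⟶ Y)]

-- The cone of the universal map `Hom(E⟦c⟧, W) ⊗ E⟦c⟧ ⟶ W`.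
theorem exists_distTriang_shiftCoaisle (hE : IsRigidBrick k E) (hW : shiftCoaisle E (c + 1) W) :
    ∃ (N : ℕ) (κ : (⨁ fun _ : Fin N => E⟦c⟧) ⟶ W) (W' : 𝒟) (q : W ⟶ W')
      (w : W' ⟶ (⨁ fun _ : Fin N => E⟦c⟧)⟦(1 : ℤ)⟧),
      Triangle.mk κ q w ∈ distTriang 𝒟 ∧ shiftCoaisle E c W' := by
  obtain ⟨N, κ, hκinj, hκsurj⟩ := exists_bijective_comp_biproduct_of_hasScalarEnd
    (hE.scalar_end.obj (shiftFunctor 𝒟 c)) W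
  obtain ⟨W', q, w, hT⟩ := distinguished_cocone_triangle κ
  refine ⟨N, κ, W', q, w, hT, shiftCoaisle_iff.mpr fun y hy x => ?_⟩
  have hxw : x ≫ w = 0 := hE.eq_zero_of_comp_shift_eq_zero
    (fun x hx => hκinj (hx.trans zero_comp.symm)) hy <| by
      rw [Category.assoc, show w ≫ κ⟦(1 : ℤ)⟧' = 0 from comp_distTriang_mor_zero₃₁ _ hT, comp_zero]
  obtain ⟨z, rfl⟩ : ∃ z : E⟦y⟧ ⟶ W, x = z ≫ q := Triangle.coyoneda_exact₃ _ hT x hxw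
  rcases hy.eq_or_lt with rfl | hy
  · obtain ⟨s, rfl⟩ := hκsurj z
    exact (Category.assoc _ _ _).trans
      (by rw [show κ ≫ q = 0 from comp_distTriang_mor_zero₁₂ _ hT, comp_zero])
  · rw [shiftCoaisle_iff.mp hW y hy z, zero_comp]

theorem shiftAisle_succ (hE : IsRigidBrick k E) (hQ : shiftAisle E c Q)
    (hQc : ∀ f : Q ⟶ E⟦c⟧, f = 0) : shiftAisle E (c + 1) Q := by
  intro W f hW
  obtain ⟨N, κ, W', q, w, hT, hW'⟩ := hE.exists_distTriang_shiftCoaisle hW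
  refine singleton_rightOrthogonal_iff.mp
    (ObjectProperty.ext_of_isTriangulatedClosed₂ _ _ hT ?_ ?_) f
  · exact rightOrthogonal_biproduct fun _ => singleton_rightOrthogonal_iff.mpr hQc
  · exact singleton_rightOrthogonal_iff.mpr fun g => hQ g hW'

theorem exists_shiftAisle_hom_ne_zero (hE : IsRigidBrick k E) {M M' : ℤ} (hQ₀ : ¬ IsZero Q)
    (hQ : shiftAisle E M Q) (hQ' : shiftCoaisle E M' Q) :
    ∃ b : ℤ, shiftAisle E b Q ∧ ∃ f : Q ⟶ E⟦b⟧, f ≠ 0 := by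
  obtain ⟨b, hb, hmax⟩ := Int.exists_greatest_of_bdd (P := fun b => shiftAisle E b Q)
    ⟨M', fun b hb => le_of_not_gt fun hlt => hQ₀ <|
      isZero_of_shiftAisle_of_shiftCoaisle hb (shiftCoaisle_mono hlt.le hQ')⟩ ⟨M, hQ⟩
  refine ⟨b, hb, ?_⟩
  by_contra! h
  exact (lt_add_one b).not_ge (hmax _ (hE.shiftAisle_succ hb h))

theorem hom_shift_eq_zero_of_hom_ne_zero (hE : IsRigidBrick k E) {a n : ℤ}
    (hQ : shiftAisle E (a + n) Q) (hQ' : shiftCoaisle E (a + 1) Q) {f : E⟦a⟧ ⟶ Q} (hf : f ≠ 0)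
    (hn : ∀ g : Q ⟶ Q⟦n⟧, g = 0) (g : Q ⟶ E⟦a + n⟧) : g = 0 := by
  obtain ⟨N, κ, W', q, w, hT, hW'⟩ := hE.exists_distTriang_shiftCoaisle hQ'
  obtain ⟨i⟩ : Nonempty (Fin N) := by
    by_contra! hN
    obtain ⟨s, rfl⟩ : ∃ s, f = s ≫ κ :=
      Triangle.coyoneda_exact₂ _ hT f (shiftCoaisle_iff.mp hW' a le_rfl _)
    exact hf (by rw [biproduct.hom_ext s 0 fun i => (hN.false i).elim, zero_comp])
  have hW'Q : (ObjectProperty.singleton Q).rightOrthogonal (W'⟦n - 1⟧) :=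
    singleton_rightOrthogonal_iff.mpr fun g =>
      hQ g (shiftCoaisle_mono (by lia) (shiftCoaisle_shift hW' (n - 1)))
  have hQQ : (ObjectProperty.singleton Q).rightOrthogonal (Q⟦(1 : ℤ)⟧⟦n - 1⟧) :=
    ObjectProperty.prop_of_iso _ ((shiftFunctorAdd' 𝒟 1 (n - 1) n (add_sub_cancel 1 n)).app Q)
      (singleton_rightOrthogonal_iff.mpr hn)
  have hsum := ObjectProperty.prop_of_iso _
    ((shiftFunctorAdd' 𝒟 1 (n - 1) n (add_sub_cancel 1 n)).symm.app _ ≪≫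
      shiftBiproductIso E (fun _ : Fin N => a) n)
    (ObjectProperty.ext_of_isTriangulatedClosed₂ _ _ (Triangle.shift_distinguished _
      (rot_of_distTriang _ (rot_of_distTriang _ hT)) (n - 1)) hW'Q hQQ)
  rw [← cancel_mono (biproduct.ι (fun _ : Fin N => E⟦a + n⟧) i), zero_comp]
  exact singleton_rightOrthogonal_iff.mp hsum _

theorem nonempty_iso_shift (hE : IsRigidBrick k E) {M M' : ℤ} (hQ₀ : ¬ IsZero Q)
    (hQs : HasScalarEnd k Q) (hneg : ∀ n : ℤ, n < 0 → ∀ f : Q ⟶ Q⟦n⟧, f = 0) (hQ : shiftAisle E M Q)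
    (hQ' : shiftCoaisle E M' Q) : ∃ a < M', Nonempty (Q ≅ E⟦a⟧) := by
  obtain ⟨b, hb, g, hg⟩ := hE.exists_shiftAisle_hom_ne_zero hQ₀ hQ hQ'
  obtain ⟨a, haM, ha, f, hf⟩ := exists_shiftCoaisle_hom_ne_zero hQ₀ hQ hQ'
  obtain ⟨N, κ, W', q, w, hT, hW'⟩ := hE.exists_distTriang_shiftCoaisle ha
  have hba : b ≤ a := le_of_not_gt fun hlt => hQ₀ <|
    isZero_of_shiftAisle_of_shiftCoaisle hb (shiftCoaisle_mono hlt ha)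
  obtain ⟨n, rfl⟩ : ∃ n, b = a + n := ⟨b - a, (add_sub_cancel a b).symm⟩
  obtain rfl : n = 0 := le_antisymm (by lia) <| le_of_not_gt fun hn =>
    hg (hE.hom_shift_eq_zero_of_hom_ne_zero hb ha hf (hneg n hn) g)
  rw [add_zero] at hb
  obtain ⟨s, hs⟩ : ∃ s, 𝟙 Q = s ≫ κ := Triangle.coyoneda_exact₂ _ hT (𝟙 Q) (hb _ hW')
  obtain ⟨-, hiso⟩ := exists_iso_of_retract_biproduct hQ₀ hQs
    (fun _ => hE.scalar_end.obj (shiftFunctor 𝒟 a)) ⟨s, κ, hs.symm⟩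
  exact ⟨a, haM, hiso⟩

end IsRigidBrick

end RigidBricks

section LinearGrowth

theorem tendsto_log_one_add_mul_div {K : ℝ} (hK : 0 ≤ K) :
    Tendsto (fun n : ℕ => Real.log (1 + K * n) / n) atTop (nhds 0) := by
  rcases hK.eq_or_lt with rfl | hK
  · simp
  have hlog := Real.tendsto_pow_log_div_mul_add_atTop K⁻¹ (-K⁻¹) 1 (inv_ne_zero hK.ne')
  have hlin : Tendsto (fun n : ℕ => 1 + K * (n : ℝ)) atTop atTop :=
    tendsto_atTop_add_const_left _ _ (tendsto_natCast_atTop_atTop.const_mul_atTop hK)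
  refine (hlog.comp hlin).congr fun n => ?_
  have hn : K⁻¹ * (1 + K * n) + -K⁻¹ = n := by
    field_simp
    ring
  simp only [Function.comp_apply, pow_one, hn]

theorem limsup_log_div_nonpos_of_le_linear {a : ℕ → ℝ} {K : ℝ} (hK : 0 ≤ K) (ha : ∀ n, 0 ≤ a n)
    (haK : ∀ n, a n ≤ 1 + K * n) :
    atTop.limsup (fun n : ℕ => ((Real.log (a n) / n : ℝ) : EReal)) ≤ 0 := by
  have hlog (n : ℕ) : Real.log (a n) ≤ Real.log (1 + K * n) := by
    rcases (ha n).eq_or_lt with h₀ | h₀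
    · rw [← h₀, Real.log_zero]
      exact Real.log_nonneg (le_add_of_nonneg_right (by positivity))
    · exact Real.log_le_log h₀ (haK n)
  have hlim : Tendsto (fun n : ℕ => ((Real.log (1 + K * n) / n : ℝ) : EReal)) atTop (nhds 0) :=
    (continuous_coe_real_ereal.tendsto 0).comp (tendsto_log_one_add_mul_div hK)
  rw [← hlim.limsup_eq]
  refine limsup_le_limsup (Eventually.of_forall fun n => ?_)
  exact EReal.coe_le_coe_iff.mpr (div_le_div_of_nonneg_right (hlog n) n.cast_nonneg)

end LinearGrowth

section PdObjects

variable {𝒟 : Type u} [Category.{v} 𝒟] [Preadditive 𝒟] [HasShift 𝒟 ℤ] [Linear ℂ 𝒟] {d : ℕ}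

theorem PdObject.hasScalarEnd (p : PdObject 𝒟 d) : HasScalarEnd ℂ p.E := by
  let ζ : p.E ≅ p.E⟦2 * ((0 : ℕ) : ℤ)⟧ := ((shiftFunctorZero' 𝒟 _ (by simp)).app p.E).symm
  have hζ : ζ.hom ≠ 0 := fun h => p.nonzero <| (IsZero.iff_id_eq_zero _).mpr <| by
    rw [← ζ.hom_inv_id, h, zero_comp]
  intro f
  obtain ⟨z, hz⟩ :=
    (finrank_eq_one_iff_of_nonzero' _ hζ).mp (p.hom_rank_one 0 (Nat.zero_le d)) (f ≫ ζ.hom)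
  exact ⟨z, by rw [← cancel_mono ζ.hom, ← hz, Linear.smul_comp, Category.id_comp]⟩

theorem PdObject.isRigidBrick (p : PdObject 𝒟 d) : IsRigidBrick ℂ p.E where
  scalar_end := p.hasScalarEnd
  hom_neg n hn := p.hom_rank_zero n (by lia)
  hom_one := p.hom_rank_zero 1 (by lia)

end PdObjects

namespace PdTwist

variable {𝒟 : Type u} [Category.{v} 𝒟] [Preadditive 𝒟] [HasZeroObject 𝒟] [HasShift 𝒟 ℤ]
  [∀ n : ℤ, (shiftFunctor 𝒟 n).Additive] [Pretriangulated 𝒟] [HasFiniteBiproducts 𝒟]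
  [Linear ℂ 𝒟] {d : ℕ} (tw : PdTwist 𝒟 d)

instance additive_P : tw.P.functor.Additive :=
  Functor.additive_of_preserves_binary_products _

theorem finrank_hom_obj_shift_le {m : ℤ} (α : tw.P.functor.obj tw.E ≅ tw.E⟦m⟧) (F : 𝒟) (n : ℤ)
    [Module.Finite ℂ (tw.E ⟶ F⟦n + m⟧)] :
    Module.finrank ℂ (tw.E ⟶ (tw.P.functor.obj F)⟦n⟧) ≤ Module.finrank ℂ (tw.E ⟶ F⟦n + m⟧) := by
  have := tw.commShift
  refine tw.hasScalarEnd.finrank_hom_le_of_functor (tw.P.functor ⋙ shiftFunctor 𝒟 (-m)) ?_ ?_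
  · exact (shiftFunctorCompIsoId 𝒟 m (-m) (add_neg_cancel m)).symm.app tw.E ≪≫
      (shiftFunctor 𝒟 (-m)).mapIso α.symm
  · exact (shiftFunctor 𝒟 (-m)).mapIso ((tw.P.functor.commShiftIso (n + m)).app F) ≪≫
      (shiftFunctorAdd' 𝒟 (n + m) (-m) n (add_neg_cancel_right n m)).symm.app _

theorem extWeight_obj_le {m : ℤ} (hm : m ≤ 0) (α : tw.P.functor.obj tw.E ≅ tw.E⟦m⟧) {t : ℝ}
    (ht : 0 ≤ t) (F : 𝒟) [∀ n : ℤ, Module.Finite ℂ (tw.E ⟶ F⟦n⟧)] :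
    extWeight ℂ tw.E (tw.P.functor.obj F) t ≤ extWeight ℂ tw.E F t := by
  obtain ⟨l, ns, -, hns⟩ := tw.H_iso F
  exact extWeight_le_of_finrank_le hm ht
    ((Set.finite_range _).subset (finrank_support_subset_range hns))
    fun n => tw.finrank_hom_obj_shift_le α F n

theorem annihilable_H_shift {G : 𝒟} {t c : ℝ}
    (hc : ∀ n : ℤ, Annihilable G t (tw.E⟦n⟧) (Real.exp (n * t) * c)) (F : 𝒟) (n : ℤ) :
    Annihilable G t ((tw.H F)⟦n⟧) (Real.exp (n * t) * c * extWeight ℂ tw.E F t) := by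
  obtain ⟨l, ns, ⟨e⟩, hns⟩ := tw.H_iso F
  have hsum : ∑ i, Real.exp ((ns i + n : ℤ) * t) * c =
      Real.exp (n * t) * c * extWeight ℂ tw.E F t := by
    rw [extWeight_eq_sum hns, Finset.mul_sum]
    refine Finset.sum_congr rfl fun i _ => ?_
    rw [Int.cast_add, add_mul, Real.exp_add]
    ring
  rw [← hsum]
  exact (Annihilable.biproduct fun i => hc (ns i + n)).retract
    (.ofIso ((shiftFunctor 𝒟 n).mapIso e ≪≫ shiftBiproductIso tw.E ns n))

theorem exists_distTriang_T_shift (F : 𝒟) :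
    ∃ (f : (tw.H F)⟦(1 : ℤ)⟧ ⟶ (tw.T F)⟦(1 : ℤ)⟧) (g : (tw.T F)⟦(1 : ℤ)⟧ ⟶ (tw.H F)⟦(0 : ℤ)⟧)
      (h : (tw.H F)⟦(0 : ℤ)⟧ ⟶ (tw.H F)⟦(1 : ℤ)⟧⟦(1 : ℤ)⟧), Triangle.mk f g h ∈ distTriang 𝒟 :=
  ⟨_, _, _, distTriang_of_iso₃ (X' := (tw.H F)⟦(0 : ℤ)⟧)
    (Triangle.shift_distinguished _ (rot_of_distTriang _ (tw.innerTri F)) 1)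
    ((shiftFunctor 𝒟 (1 : ℤ)).mapIso ((shiftFunctorAdd' 𝒟 (-2) 1 (-1) (by simp)).symm.app _) ≪≫
      (shiftFunctorAdd' 𝒟 (-1) 1 0 (by simp)).symm.app _)⟩

theorem annihilable_T_shift {G : 𝒟} {t c : ℝ}
    (hc : ∀ n : ℤ, Annihilable G t (tw.E⟦n⟧) (Real.exp (n * t) * c)) (F : 𝒟) :
    Annihilable G t ((tw.T F)⟦(1 : ℤ)⟧) ((Real.exp t + 1) * c * extWeight ℂ tw.E F t) := by
  obtain ⟨f, g, h, hT⟩ := tw.exists_distTriang_T_shift F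
  simpa [add_mul] using
    Annihilable.extension hT (tw.annihilable_H_shift hc F 1) (tw.annihilable_H_shift hc F 0)

theorem exists_H_E_shift_iso :
    ∃ (l : ℕ) (ns : Fin l → ℤ), (∀ i, -(2 * d) ≤ ns i ∧ ns i ≤ 0) ∧
      (Finset.univ.filter fun i => ns i = 0).card = 1 ∧
      ∀ n : ℤ, Nonempty ((tw.H tw.E)⟦n⟧ ≅ ⨁ fun i => tw.E⟦ns i + n⟧) := by
  obtain ⟨l, ns, ⟨e⟩, hns⟩ := tw.H_iso tw.E
  refine ⟨l, ns, fun i => ?_, ?_, fun n => ⟨(shiftFunctor 𝒟 n).mapIso e ≪≫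
    shiftBiproductIso tw.E ns n⟩⟩
  · by_contra hi
    have hcard := hns (-ns i)
    have hzero := tw.hom_rank_zero (-ns i) (by lia)
    have : Subsingleton (tw.E ⟶ tw.E⟦-ns i⟧) := subsingleton_of_forall_eq 0 hzero
    rw [Module.finrank_zero_of_subsingleton, Finset.card_eq_zero,
      Finset.filter_eq_empty_iff] at hcard
    exact hcard (Finset.mem_univ i) (neg_neg _).symm
  · simpa using (hns 0).trans (tw.hom_rank_one 0 d.zero_le)

theorem prop_P_E (S : ObjectProperty 𝒟) [S.IsClosedUnderIsomorphisms]
    [S.IsTriangulatedClosed₂] (hsum : ∀ {l : ℕ} {X : Fin l → 𝒟}, (∀ i, S (X i)) → S (⨁ X))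
    (hE : ∀ y : ℤ, -(2 * d) ≤ y → y ≤ 1 → S (tw.E⟦y⟧)) : S (tw.P.functor.obj tw.E) := by
  obtain ⟨l, ns, hns, -, he⟩ := tw.exists_H_E_shift_iso
  have hH (n : ℤ) (h₀ : 0 ≤ n) (h₁ : n ≤ 1) : S ((tw.H tw.E)⟦n⟧) :=
    S.prop_of_iso (he n).some.symm <| hsum fun i =>
      hE _ (by linarith [(hns i).1]) (by linarith [(hns i).2])
  obtain ⟨f, g, h, hT⟩ := tw.exists_distTriang_T_shift tw.E
  refine S.ext_of_isTriangulatedClosed₂ _ (rot_of_distTriang _ (tw.outerTri tw.E)) ?_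
    (S.ext_of_isTriangulatedClosed₂ _ hT (hH 1 zero_le_one le_rfl) (hH 0 le_rfl zero_le_one))
  exact S.prop_of_iso ((shiftFunctorZero 𝒟 ℤ).app tw.E) (hE 0 (by lia) zero_le_one)

theorem exists_P_E_iso_shift [∀ X Y : 𝒟, Module.Finite ℂ (X ⟶ Y)] :
    ∃ a ≤ (1 : ℤ), Nonempty (tw.P.functor.obj tw.E ≅ tw.E⟦a⟧) := by
  have := tw.commShift
  have hE := tw.isRigidBrick
  have hnonzero : ¬ IsZero (tw.P.functor.obj tw.E) := fun h =>
    tw.nonzero (IsZero.of_full_of_faithful_of_isZero tw.P.functor _ h)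
  obtain ⟨a, ha, hiso⟩ := hE.nonempty_iso_shift (Q := tw.P.functor.obj tw.E)
    (M := -(2 * d)) (M' := 2) hnonzero (hE.scalar_end.obj tw.P.functor)
    (fun n hn => eq_zero_of_map_eq_zero_of_iso (hE.hom_neg n hn) tw.P.functor (Iso.refl _)
      ((tw.P.functor.commShiftIso n).app tw.E))
    (tw.prop_P_E _ leftOrthogonal_biproduct fun y hy _ => shiftAisle_shift hy)
    (tw.prop_P_E _ rightOrthogonal_biproduct fun y _ hy => shiftCoaisle_iff.mpr fun x hx =>
      hom_shift_eq_zero (hE.hom_neg (y - x) (by lia)) (sub_add_cancel y x))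
  exact ⟨a, Int.lt_add_one_iff.mp ha, hiso⟩

theorem finrank_hom_T_shift_le_one [∀ X Y : 𝒟, Module.Finite ℂ (X ⟶ Y)] :
    Module.finrank ℂ (tw.E⟦(1 : ℤ)⟧ ⟶ (tw.T tw.E)⟦(1 : ℤ)⟧) ≤ 1 := by
  have hE := tw.isRigidBrick
  obtain ⟨l, ns, hns, hcard, he⟩ := tw.exists_H_E_shift_iso
  obtain ⟨f, g, h, hT⟩ := tw.exists_distTriang_T_shift tw.E
  have hterm (i : Fin l) : Module.finrank ℂ (tw.E⟦(1 : ℤ)⟧ ⟶ tw.E⟦ns i + 1⟧) ≤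
      if ns i = 0 then 1 else 0 := by
    split_ifs with hi
    · rw [hi, zero_add]
      exact HasScalarEnd.finrank_end_le_one (hE.scalar_end.obj (shiftFunctor 𝒟 (1 : ℤ)))
    · exact (finrank_zero_iff_forall_zero.mpr
        (hom_shift_eq_zero (hE.hom_neg (ns i) ((hns i).2.lt_of_ne hi)) rfl)).le
  have hvanish :
      (ObjectProperty.singleton (tw.E⟦(1 : ℤ)⟧)).rightOrthogonal ((tw.H tw.E)⟦(0 : ℤ)⟧) :=
    ObjectProperty.prop_of_iso _ (he 0).some.symm <| rightOrthogonal_biproduct fun i =>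
      singleton_rightOrthogonal_iff.mpr <|
        hom_shift_eq_zero (hE.hom_neg (ns i - 1) (by linarith [(hns i).2])) (by ring)
  have hsurj : Function.Surjective
      (Linear.rightComp ℂ (tw.E⟦(1 : ℤ)⟧) ((he 1).some.inv ≫ f)) := fun x => by
    obtain ⟨y, rfl⟩ : ∃ y, x = y ≫ f :=
      Triangle.coyoneda_exact₂ _ hT x (singleton_rightOrthogonal_iff.mp hvanish _)
    exact ⟨y ≫ (he 1).some.hom, by simp⟩
  calc Module.finrank ℂ (tw.E⟦(1 : ℤ)⟧ ⟶ (tw.T tw.E)⟦(1 : ℤ)⟧)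
      ≤ Module.finrank ℂ (tw.E⟦(1 : ℤ)⟧ ⟶ ⨁ fun i => tw.E⟦ns i + 1⟧) :=
        LinearMap.finrank_le_finrank_of_surjective hsurj
    _ ≤ ∑ i, Module.finrank ℂ (tw.E⟦(1 : ℤ)⟧ ⟶ tw.E⟦ns i + 1⟧) := finrank_hom_biproduct_le ℂ _ _
    _ ≤ ∑ i, if ns i = 0 then 1 else 0 := Finset.sum_le_sum fun i _ => hterm i
    _ = 1 := by rw [← Finset.card_filter, hcard]

theorem isEmpty_P_E_iso_shift_one [∀ X Y : 𝒟, Module.Finite ℂ (X ⟶ Y)] :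
    IsEmpty (tw.P.functor.obj tw.E ≅ tw.E⟦(1 : ℤ)⟧) := by
  refine ⟨fun α => ?_⟩
  have hη : tw.η tw.E = 0 := by
    rw [← cancel_mono α.hom, tw.isRigidBrick.hom_one (_ ≫ _), zero_comp]
  obtain ⟨s, hs⟩ : ∃ s, 𝟙 tw.E = s ≫ tw.ev tw.E :=
    Triangle.coyoneda_exact₂ _ (tw.outerTri tw.E) (𝟙 tw.E)
      (show 𝟙 tw.E ≫ tw.η tw.E = 0 by rw [hη, comp_zero])
  have hE₁ : 𝟙 (tw.E⟦(1 : ℤ)⟧) ≠ 0 := fun h => tw.nonzero <|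
    IsZero.of_full_of_faithful_of_isZero (shiftFunctor 𝒟 (1 : ℤ)) _
      ((IsZero.iff_id_eq_zero _).mpr h)
  have hu : α.inv ≫ tw.dl tw.E ≠ 0 := fun h => by
    obtain ⟨z, hz⟩ : ∃ z, α.inv = z ≫ tw.η tw.E :=
      Triangle.coyoneda_exact₃ _ (tw.outerTri tw.E) α.inv h
    exact hE₁ (by rw [← α.inv_hom_id, hz, hη, comp_zero, zero_comp])
  obtain ⟨z, hz⟩ := (finrank_eq_one_iff_of_nonzero' _ hu).mp
    (tw.finrank_hom_T_shift_le_one.antisymm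
      (Module.finrank_pos_iff_exists_ne_zero.mpr ⟨_, hu⟩)) (s⟦(1 : ℤ)⟧')
  have hdl : tw.dl tw.E ≫ (tw.ev tw.E)⟦(1 : ℤ)⟧' = 0 :=
    comp_distTriang_mor_zero₃₁ _ (tw.outerTri tw.E)
  refine hE₁ ?_
  calc 𝟙 (tw.E⟦(1 : ℤ)⟧) = s⟦(1 : ℤ)⟧' ≫ (tw.ev tw.E)⟦(1 : ℤ)⟧' := by
        rw [← Functor.map_comp, ← hs, CategoryTheory.Functor.map_id]
    _ = 0 := by rw [← hz, Linear.smul_comp, Category.assoc, hdl, comp_zero, smul_zero]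

theorem exists_P_E_iso_shift_nonpos [∀ X Y : 𝒟, Module.Finite ℂ (X ⟶ Y)] :
    ∃ m ≤ (0 : ℤ), Nonempty (tw.P.functor.obj tw.E ≅ tw.E⟦m⟧) := by
  obtain ⟨a, ha, hiso⟩ := tw.exists_P_E_iso_shift
  refine ⟨a, Int.lt_add_one_iff.mp (ha.lt_of_ne ?_), hiso⟩
  rintro rfl
  exact not_isEmpty_iff.mpr hiso tw.isEmpty_P_E_iso_shift_one

theorem add_mem_complexitySet_obj {G : 𝒟} {t c r : ℝ}
    (hc : ∀ n : ℤ, Annihilable G t (tw.E⟦n⟧) (Real.exp (n * t) * c)) {F : 𝒟}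
    (hr : r ∈ complexitySet 𝒟 G F t) :
    r + (Real.exp t + 1) * c * extWeight ℂ tw.E F t ∈ complexitySet 𝒟 G (tw.P.functor.obj F) t :=
  add_mem_complexitySet_of_distTriang (rot_of_distTriang _ (tw.outerTri F)) hr
    (tw.annihilable_T_shift hc F)

theorem exists_complexity_iterate_le {m : ℤ} (hm : m ≤ 0)
    (α : tw.P.functor.obj tw.E ≅ tw.E⟦m⟧) {t : ℝ} (ht : 0 ≤ t) {G : 𝒟}
    (hG : InSplitClosure 𝒟 G tw.E) [∀ F : 𝒟, Module.Finite ℂ (tw.E ⟶ F)] :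
    ∃ K : ℝ, 0 ≤ K ∧
      ∀ n : ℕ, complexity 𝒟 G ((fun X => tw.P.functor.obj X)^[n] G) t ≤ 1 + K * n := by
  obtain ⟨c, hc₀, hc⟩ := exists_annihilable_shift hG t
  have hweight (n : ℕ) : extWeight ℂ tw.E ((fun X => tw.P.functor.obj X)^[n] G) t ≤
      extWeight ℂ tw.E G t := by
    induction n with
    | zero => exact le_rfl
    | succ n ih =>
      rw [Function.iterate_succ_apply']
      exact (tw.extWeight_obj_le hm α ht _).trans ih
  let K := (Real.exp t + 1) * c * extWeight ℂ tw.E G t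
  have hmem (n : ℕ) : ∃ r ∈ complexitySet 𝒟 G ((fun X => tw.P.functor.obj X)^[n] G) t,
      r ≤ 1 + K * n := by
    induction n with
    | zero => exact ⟨1, one_mem_complexitySet_self G t, by simp⟩
    | succ n ih =>
      obtain ⟨r, hr, hrn⟩ := ih
      rw [Function.iterate_succ_apply']
      refine ⟨_, tw.add_mem_complexitySet_obj hc hr, ?_⟩
      calc r + (Real.exp t + 1) * c * extWeight ℂ tw.E ((fun X => tw.P.functor.obj X)^[n] G) t
          ≤ (1 + K * n) + K :=
            add_le_add hrn (mul_le_mul_of_nonneg_left (hweight n) (by positivity))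
        _ = 1 + K * (n + 1 : ℕ) := by push_cast; ring
  refine ⟨K, mul_nonneg (by positivity) (extWeight_nonneg ℂ tw.E G t), fun n => ?_⟩
  obtain ⟨r, hr, hrn⟩ := hmem n
  exact (complexity_le_of_mem hr).trans hrn

end PdTwist

theorem entropy_PdTwist_le_zero_general {d : ℕ} (tw : PdTwist C d) {t : ℝ} (ht : 0 ≤ t) {G : C}
    (hG : InSplitClosure C G tw.E) :
    atTop.limsup (fun n : ℕ =>
        ((Real.log (complexity C G ((fun X => tw.P.functor.obj X)^[n] G) t) / n : ℝ) : EReal))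
      ≤ (0 : EReal) := by
  obtain ⟨m, hm, ⟨α⟩⟩ := tw.exists_P_E_iso_shift_nonpos
  obtain ⟨K, hK, hgrowth⟩ := tw.exists_complexity_iterate_le hm α ht hG
  exact limsup_log_div_nonpos_of_le_linear hK (fun _ => complexity_nonneg ..) hgrowth

/-- For every `t > 0`, `h_t(P_ℰ) ≤ 0` (stated as a `limsup` bound on
the defining sequence of the categorical entropy, for any split generator). -/
theorem entropy_PdTwist_le_zero (d : ℕ) (tw : PdTwist C d) (t : ℝ) (ht : 0 < t) :
    ∀ G : C, IsSplitGenerator C G →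
      atTop.limsup (fun n : ℕ =>
          ((Real.log (complexity C G ((fun X => tw.P.functor.obj X)^[n] G) t) / n : ℝ) : EReal))
        ≤ (0 : EReal) :=
  fun _ hG => entropy_PdTwist_le_zero_general C tw ht.le (hG tw.E)
end
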